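/- arXiv:2412.00593 — 3 statements merged into one kernel-verified Lean document; each statement's English description precedes it below -/
import Mathlib

section
/- For any real polynomial h of degree at most q, any m ≥ 1, any δ > 0, and any x with |x| < δ, the m-th derivative satisfies |h^(m)(x)| ≤ (2q / (δ √(1 − (x/δ)²)))^m · sup_{|y| ≤ δ} |h(y)|. -/
open Polynomial in
lemma aux_roots (N : ℕ) (hN : 1 ≤ N) : ∃ ζ : ℕ → ℂ, (∀ k, ζ k ^ N = -1) ∧
    ∀ j, 1 ≤ j → j < N → ∑ k ∈ Finset.range N, ζ k ^ j = 0 := by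
  have hN0 : N ≠ 0 := by omega
  have hNC : (N : ℂ) ≠ 0 := by exact_mod_cast hN0
  have hω := Complex.isPrimitiveRoot_exp N hN0
  set ω := Complex.exp (2 * Real.pi * Complex.I / N) with hωd
  refine ⟨fun k => Complex.exp (Real.pi * Complex.I / N) * ω ^ k, ?_, ?_⟩
  · intro k
    rw [mul_pow, ← pow_mul, mul_comm k N, pow_mul, hω.pow_eq_one, one_pow, mul_one,
      ← Complex.exp_nat_mul, mul_div_cancel₀ _ hNC, Complex.exp_pi_mul_I]
  · intro j h1 h2
    have hne : ω ^ j ≠ 1 := hω.pow_ne_one_of_pos_of_lt (by omega) h2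
    have : ∑ k ∈ Finset.range N, (ω ^ j) ^ k = 0 := by
      rw [geom_sum_eq hne, ← pow_mul, mul_comm j N, pow_mul, hω.pow_eq_one]
      simp
    simp_rw [mul_pow, ← pow_mul, mul_comm _ j, pow_mul]
    rw [← Finset.mul_sum, this, mul_zero]

lemma aux_kernel (N : ℕ) (hN : 1 ≤ N) : ∃ (ζ c : ℕ → ℂ), (∀ k, ‖ζ k‖ = 1) ∧
    (∑ k ∈ Finset.range N, ‖c k‖ = (N : ℝ) ^ 2 / 4) ∧
    ∀ j : ℕ, j ≤ N → ∑ k ∈ Finset.range N, c k * ζ k ^ j = (N / 2 : ℂ) * (j - N / 2) := by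
  obtain ⟨ζ, h1, h2⟩ := aux_roots N hN
  have hN0 : N ≠ 0 := by omega
  have hnorm : ∀ k, ‖ζ k‖ = 1 := by
    intro k
    have := congrArg norm (h1 k)
    rw [norm_pow, norm_neg, norm_one] at this
    exact (pow_eq_one_iff_of_nonneg (norm_nonneg _) hN0).1 this
  have hne : ∀ k, 1 - ζ k ≠ 0 := by
    intro k h
    have h' : ζ k = 1 := (sub_eq_zero.1 h).symm
    have := h1 k
    rw [h', one_pow] at this
    norm_num at this
  have hconj : ∀ k, ζ k * (starRingEnd ℂ) (ζ k) = 1 := by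
    intro k
    rw [Complex.mul_conj, Complex.normSq_eq_norm_sq, hnorm]; norm_num
  set c : ℕ → ℂ := fun k => ζ k / (1 - ζ k) ^ 2 with hc
  have hcr : ∀ k, c k = -((‖c k‖ : ℝ) : ℂ) := by
    intro k
    have e1 : (1 - ζ k) ^ 2 = - ζ k * ((‖1 - ζ k‖ ^ 2 : ℝ) : ℂ) := by
      rw [← Complex.normSq_eq_norm_sq, ← Complex.mul_conj]
      simp only [map_sub, map_one]
      linear_combination (-(1 - ζ k)) * hconj k
    have e2 : ‖c k‖ = 1 / ‖1 - ζ k‖ ^ 2 := by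
      simp [hc, hnorm]
    have hz : ζ k ≠ 0 := by
      intro h; have := hnorm k; rw [h] at this; simp at this
    have hn : ((‖1 - ζ k‖ : ℝ) : ℂ) ≠ 0 := by
      simpa using hne k
    rw [e2]
    simp only [hc]
    rw [e1]
    push_cast
    field_simp
  set S : ℕ → ℂ := fun j => ∑ k ∈ Finset.range N, c k * ζ k ^ j with hS
  set D : ℂ := ∑ k ∈ Finset.range N, (-(ζ k / (1 - ζ k))) with hD
  have hstep : ∀ j, j < N → S (j+1) - S j = D := by
    intro j
    induction j with
    | zero =>
      intro _
      simp only [hS, hD]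
      rw [← Finset.sum_sub_distrib]
      refine Finset.sum_congr rfl fun k _ => ?_
      have := hne k
      simp only [hc]
      field_simp
      ring
    | succ j ih =>
      intro hj
      have e := ih (by omega)
      have e3 := h2 (j+1) (by omega) hj
      have : S (j+1+1) - S (j+1) - (S (j+1) - S j) = 0 := by
        rw [← e3]
        simp only [hS]
        rw [← Finset.sum_sub_distrib, ← Finset.sum_sub_distrib, ← Finset.sum_sub_distrib]
        refine Finset.sum_congr rfl fun k _ => ?_
        have := hne k
        simp only [hc]
        field_simp
        ring
      linear_combination this + e
  have hlin : ∀ j, j ≤ N → S j = S 0 + j * D := by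
    intro j
    induction j with
    | zero => intro _; simp
    | succ j ih =>
      intro hj
      have := ih (by omega)
      have e := hstep j hj
      push_cast
      linear_combination this + e
  have hSN : S N = - S 0 := by
    simp only [hS]
    rw [← Finset.sum_neg_distrib]
    refine Finset.sum_congr rfl fun k _ => ?_
    rw [h1]; simp
  have hS0 : S 0 = -((∑ k ∈ Finset.range N, ‖c k‖ : ℝ) : ℂ) := by
    simp only [hS, pow_zero, mul_one]
    push_cast
    rw [← Finset.sum_neg_distrib]
    exact Finset.sum_congr rfl fun k _ => hcr k
  have hND : (N : ℂ) * D = 2 * ((∑ k ∈ Finset.range N, ‖c k‖ : ℝ) : ℂ) := by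
    have := hlin N le_rfl
    rw [hSN, hS0] at this
    linear_combination -this
  have hDre : D.re = N / 2 := by
    have hterm : ∀ k, (-(ζ k / (1 - ζ k))).re = 1 / 2 := by
      intro k
      have : -(ζ k / (1 - ζ k)) + (starRingEnd ℂ) (-(ζ k / (1 - ζ k))) = 1 := by
        have a1 := hne k
        have a2 : 1 - (starRingEnd ℂ) (ζ k) ≠ 0 := by
          intro h
          apply a1
          have := congrArg (starRingEnd ℂ) h
          simpa using this
        simp only [map_neg, map_div₀, map_sub, map_one]
        field_simp
        linear_combination hconj k
      have := congrArg Complex.re this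
      rw [Complex.add_re, Complex.conj_re, Complex.one_re] at this
      linarith
    rw [hD, Complex.re_sum, Finset.sum_congr rfl (fun k _ => hterm k)]
    simp; ring
  have hsum : ∑ k ∈ Finset.range N, ‖c k‖ = (N : ℝ) ^ 2 / 4 := by
    have := congrArg Complex.re hND
    rw [← Complex.ofReal_natCast, Complex.re_ofReal_mul, hDre] at this
    norm_num at this

    linarith
  refine ⟨ζ, c, hnorm, hsum, fun j hj => ?_⟩
  have hNC : (N : ℂ) ≠ 0 := by exact_mod_cast hN0
  have hDv : D = N / 2 := by
    apply mul_left_cancel₀ hNC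
    rw [hND, hsum]; push_cast; ring
  have := hlin j hj
  rw [hS0, hsum, hDv] at this
  simp only [hS] at this
  rw [this]
  push_cast; ring

open Polynomial in
/-- Bernstein's inequality on the unit circle for complex polynomials. -/
lemma aux_bernstein (N : ℕ) (hN : 1 ≤ N) (P : ℂ[X]) (hP : P.natDegree ≤ N) (B : ℝ)
    (hB : ∀ w : ℂ, ‖w‖ = 1 → ‖P.eval w‖ ≤ B) (w : ℂ) (hw : ‖w‖ = 1) :
    ‖P.derivative.eval w‖ ≤ N * B := by
  obtain ⟨ζ, c, h1, h2, h3⟩ := aux_kernel N hN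
  have hNC : (N : ℂ) ≠ 0 := by exact_mod_cast (by omega : N ≠ 0)
  have hNR : (0 : ℝ) < N := by exact_mod_cast hN
  have key : w * P.derivative.eval w =
      (N / 2 : ℂ) * P.eval w + (2 / N : ℂ) * ∑ k ∈ Finset.range N, c k * P.eval (w * ζ k) := by
    have e1 : w * P.derivative.eval w = ∑ j ∈ Finset.range (N+1), P.coeff j * j * w ^ j := by
      rw [derivative_eval, P.sum_over_range' (by simp) (N+1) (by omega), Finset.mul_sum]
      refine Finset.sum_congr rfl fun j _ => ?_
      rcases j with _ | j
      · simp
      · simp; ring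
    have e2 : ∀ z, P.eval z = ∑ j ∈ Finset.range (N+1), P.coeff j * z ^ j := by
      intro z
      exact eval_eq_sum_range' (by omega) z
    rw [e1, e2 w]
    simp_rw [e2 (w * _), Finset.mul_sum]
    rw [Finset.sum_comm, ← Finset.sum_add_distrib]
    refine Finset.sum_congr rfl fun j hj => ?_
    have h := h3 j (by simpa [Nat.lt_succ_iff] using hj)
    have : ∑ k ∈ Finset.range N, (2 / N : ℂ) * (c k * (P.coeff j * (w * ζ k) ^ j)) =
        (2 / N : ℂ) * P.coeff j * w ^ j * ∑ k ∈ Finset.range N, c k * ζ k ^ j := by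
      rw [Finset.mul_sum]
      refine Finset.sum_congr rfl fun k _ => ?_
      rw [mul_pow]; ring
    rw [this, h]
    field_simp
    ring
  have hn : ‖P.derivative.eval w‖ = ‖w * P.derivative.eval w‖ := by rw [norm_mul, hw, one_mul]
  rw [hn, key]
  have b1 : ‖∑ k ∈ Finset.range N, c k * P.eval (w * ζ k)‖ ≤ (N : ℝ)^2/4 * B := by
    rw [← h2, Finset.sum_mul]
    refine norm_sum_le_of_le _ fun k _ => ?_
    rw [norm_mul]
    exact mul_le_mul_of_nonneg_left (hB _ (by rw [norm_mul, hw, h1, one_mul])) (norm_nonneg _)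
  calc _ ≤ ‖(N / 2 : ℂ) * P.eval w‖ + ‖(2 / N : ℂ) * ∑ k ∈ Finset.range N, c k * P.eval (w * ζ k)‖ :=
        norm_add_le _ _
    _ ≤ (N / 2 : ℝ) * B + (2 / N : ℝ) * ((N : ℝ)^2/4 * B) := by
        rw [norm_mul, norm_mul]
        have n1 : ‖(N / 2 : ℂ)‖ = N / 2 := by simp
        have n2 : ‖(2 / N : ℂ)‖ = 2 / N := by simp
        rw [n1, n2]
        gcongr
        exact hB w hw
    _ = N * B := by field_simp; ring

open Polynomial in
/-- The self-reciprocal polynomial `w ^ q * h ((w + w⁻¹) / 2)`. -/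
lemma aux_F (q : ℕ) (h : ℂ[X]) (hq : h.natDegree ≤ q) : ∃ F : ℂ[X], F.natDegree ≤ 2 * q ∧
    ∀ t : ℂ, F.eval (Complex.exp (t * Complex.I)) =
      Complex.exp (t * Complex.I) ^ q * h.eval (Complex.cos t) := by
  refine ⟨∑ i ∈ Finset.range (q+1), C (h.coeff i * (1/2) ^ i) * (X ^ 2 + 1) ^ i * X ^ (q - i), ?_, ?_⟩
  · refine natDegree_sum_le_of_forall_le _ _ fun i hi => ?_
    have hi' : i ≤ q := by simpa [Nat.lt_succ_iff] using hi
    have : (C (h.coeff i * (1/2) ^ i) * (X ^ 2 + 1) ^ i * X ^ (q - i)).natDegree ≤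
      0 + i * 2 + (q - i) := by
      compute_degree
      omega
    omega
  · intro t
    rw [eval_finsetSum, eval_eq_sum_range' (n := q+1) (by omega), Finset.mul_sum]
    refine Finset.sum_congr rfl fun i hi => ?_
    have hi' : i ≤ q := by simpa [Nat.lt_succ_iff] using hi
    set w := Complex.exp (t * Complex.I) with hw
    have hw0 : w ≠ 0 := Complex.exp_ne_zero _
    have hcos : Complex.cos t * (2 * w) = w ^ 2 + 1 := by
      rw [Complex.cos, neg_mul, Complex.exp_neg, ← hw]
      field_simp
    simp only [eval_mul, eval_C, eval_pow, eval_add, eval_X, eval_one]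
    rw [← hcos]
    have : w ^ q = w ^ i * w ^ (q - i) := by rw [← pow_add]; congr 1; omega
    rw [this, mul_pow, mul_pow]
    have h2 : (1/2 : ℂ)^i * 2^i = 1 := by rw [← mul_pow]; norm_num
    linear_combination (h.coeff i * Complex.cos t ^ i * w ^ i * w ^ (q - i)) * h2

open Polynomial in
lemma aux_circle (q : ℕ) (h : ℝ[X]) (B : ℝ)
    (hB : ∀ y : ℝ, |y| ≤ 1 → |h.eval y| ≤ B) (F : ℂ[X])
    (hF : ∀ t : ℂ, F.eval (Complex.exp (t * Complex.I)) =
      Complex.exp (t * Complex.I) ^ q * (h.map Complex.ofRealHom).eval (Complex.cos t))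
    (w : ℂ) (hw : ‖w‖ = 1) : ‖F.eval w‖ ≤ B := by
  have e : w = Complex.exp (w.arg * Complex.I) := by
    have := Complex.norm_mul_exp_arg_mul_I w
    rw [hw] at this
    simpa using this.symm
  rw [e, hF, norm_mul, norm_pow, Complex.norm_exp_ofReal_mul_I, one_pow, one_mul,
    ← Complex.ofReal_cos]
  have : (h.map Complex.ofRealHom).eval ((Real.cos w.arg : ℝ) : ℂ) =
      ((h.eval (Real.cos w.arg) : ℝ) : ℂ) := by
    have := eval_map_apply (p := h) Complex.ofRealHom (Real.cos w.arg)
    simpa using this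
  rw [this, Complex.norm_real, Real.norm_eq_abs]
  exact hB _ (Real.abs_cos_le_one _)

open Polynomial in
lemma aux_walsh (q : ℕ) (h : ℝ[X]) (hq : h.natDegree ≤ q) (B : ℝ)
    (hB : ∀ y : ℝ, |y| ≤ 1 → |h.eval y| ≤ B) (t : ℂ) :
    ‖(h.map Complex.ofRealHom).eval (Complex.cos t)‖ ≤ Real.exp (q * |t.im|) * B := by
  wlog ht : 0 ≤ t.im generalizing t
  · have := this (-t) (by simp; linarith)
    simpa using this
  obtain ⟨F, -, hF⟩ := aux_F q (h.map Complex.ofRealHom) ((natDegree_map_le).trans hq)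
  have hc := aux_circle q h B hB F hF
  have hin : ∀ w : ℂ, ‖w‖ ≤ 1 → ‖F.eval w‖ ≤ B := by
    intro w hw
    refine Complex.norm_le_of_forall_mem_frontier_norm_le (f := fun z => F.eval z)
      (U := Metric.ball 0 1) Metric.isBounded_ball
      (F.differentiable.diffContOnCl) ?_ ?_
    · intro z hz
      rw [frontier_ball _ one_ne_zero] at hz
      exact hc z (by simpa using hz)
    · rw [closure_ball _ one_ne_zero]; simpa using hw
  have hn : ‖Complex.exp (t * Complex.I)‖ = Real.exp (-t.im) := by
    rw [Complex.norm_exp]; simp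
  have := hin (Complex.exp (t * Complex.I)) (by rw [hn]; simpa using ht)
  rw [hF, norm_mul, norm_pow, hn, ← Real.exp_nat_mul] at this
  rw [abs_of_nonneg ht]
  calc _ = Real.exp (q * t.im) * (Real.exp (q * -t.im) * ‖(h.map Complex.ofRealHom).eval (Complex.cos t)‖) := by
        rw [← mul_assoc, ← Real.exp_add]; simp
    _ ≤ _ := by gcongr

lemma aux_dist (x : ℝ) (hx : |x| ≤ 1) (t : ℂ) :
    |t.im| * Real.sqrt (1 - x ^ 2) ≤ ‖Complex.cos t - x‖ := by
  have hx2 : 0 ≤ 1 - x ^ 2 := by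
    have := (sq_le_one_iff_abs_le_one x).2 hx
    linarith
  refine (sq_le_sq₀ (by positivity) (norm_nonneg _)).1 ?_
  rw [mul_pow, Real.sq_sqrt hx2, ← Complex.normSq_eq_norm_sq, sq_abs]
  have e : Complex.cos t - x = ((Real.cos t.re * Real.cosh t.im - x : ℝ) : ℂ)
      + ((-(Real.sin t.re * Real.sinh t.im) : ℝ) : ℂ) * Complex.I := by
    rw [Complex.cos_eq]
    push_cast
    ring
  rw [e, Complex.normSq_add_mul_I]
  have h1 := Real.sin_sq_add_cos_sq t.re
  have h2 := Real.cosh_sq t.im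
  have h3 : t.im ^ 2 ≤ Real.sinh t.im ^ 2 := by
    rw [sq_le_sq, Real.abs_sinh]
    exact Real.self_le_sinh_iff.2 (abs_nonneg _)
  have h4 : (Real.cos t.re * Real.cosh t.im - x) ^ 2 + (-(Real.sin t.re * Real.sinh t.im)) ^ 2
      = (Real.cos t.re - Real.cosh t.im * x) ^ 2 + Real.sinh t.im ^ 2 * (1 - x ^ 2) := by
    linear_combination (Real.sinh t.im ^ 2) * h1 + (Real.cos t.re ^ 2 - x ^ 2) * h2
  rw [h4]
  nlinarith [sq_nonneg (Real.cos t.re - Real.cosh t.im * x), mul_le_mul_of_nonneg_right h3 hx2]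

lemma aux_fact (m : ℕ) (hm : 2 ≤ m) : (m.factorial : ℝ) * Real.exp m ≤ (2 * m) ^ m := by
  induction m, hm using Nat.le_induction with
  | base =>
    have h := Real.exp_one_lt_d9
    have h' : Real.exp ((2 : ℕ) : ℝ) = Real.exp 1 ^ 2 := by
      rw [← Real.exp_nat_mul]; norm_num
    rw [h']
    have := Real.exp_pos 1
    rw [Nat.factorial_two]; push_cast
    nlinarith
  | succ m hm ih =>
    have hm0 : (0 : ℝ) < m := by exact_mod_cast (by omega : 0 < m)
    have h := Real.exp_one_lt_d9
    have hb : 2 * (m : ℝ) ^ m ≤ (m + 1) ^ m := by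
      have := one_add_mul_le_pow (a := 1 / (m : ℝ)) (by have : 0 ≤ 1 / (m : ℝ) := by positivity
                                                        linarith) m
      have e : (m + 1 : ℝ) ^ m = (1 + 1 / (m : ℝ)) ^ m * m ^ m := by
        rw [← mul_pow]; congr 1; field_simp
      rw [e]
      have h2 : 1 + (m : ℝ) * (1 / m) = 2 := by field_simp; norm_num
      rw [h2] at this
      gcongr
    rw [Nat.factorial_succ]
    push_cast
    rw [Real.exp_add]
    calc ((m : ℝ) + 1) * m.factorial * (Real.exp m * Real.exp 1)
        = (m.factorial * Real.exp m) * ((m + 1) * Real.exp 1) := by ring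
      _ ≤ (2 * m) ^ m * ((m + 1) * 4) := by gcongr; linarith
      _ = 2 ^ m * (2 * (m : ℝ) ^ m) * (2 * (m + 1)) := by rw [mul_pow]; ring
      _ ≤ 2 ^ m * (m + 1) ^ m * (2 * (m + 1)) := by gcongr
      _ = _ := by rw [pow_succ, mul_pow]

open Polynomial in
lemma aux_iter {𝕜 : Type*} [NontriviallyNormedField 𝕜] (p : 𝕜[X]) (m : ℕ) :
    iteratedDeriv m (fun y => p.eval y) = fun y => (derivative^[m] p).eval y := by
  induction m with
  | zero => simp
  | succ m ih =>
    rw [iteratedDeriv_succ, ih, Function.iterate_succ_apply']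
    funext y
    exact Polynomial.deriv _

open Polynomial in
lemma aux_one (q : ℕ) (h : ℝ[X]) (hq : h.natDegree ≤ q) (hq1 : 1 ≤ q) (B : ℝ)
    (hB : ∀ y : ℝ, |y| ≤ 1 → |h.eval y| ≤ B) (x : ℝ) (hx : |x| < 1) :
    |h.derivative.eval x| * Real.sqrt (1 - x ^ 2) ≤ 2 * q * B := by
  obtain ⟨F, hd, hF⟩ := aux_F q (h.map Complex.ofRealHom) ((natDegree_map_le).trans hq)
  have hc := aux_circle q h B hB F hF
  set θ := Real.arccos x with hθ
  have hcos : Real.cos θ = x := Real.cos_arccos (by linarith [(abs_lt.1 hx).1]) (abs_lt.1 hx).2.le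
  have hsin : Real.sin θ = Real.sqrt (1 - x ^ 2) := Real.sin_arccos x
  set w := Complex.exp ((θ : ℂ) * Complex.I) with hw
  have hwn : ‖w‖ = 1 := Complex.norm_exp_ofReal_mul_I θ
  have hb := aux_bernstein (2 * q) (by omega) F hd B hc w hwn
  have dE : HasDerivAt (fun t : ℂ => Complex.exp (t * Complex.I)) (w * Complex.I) (θ : ℂ) := by
    have := ((hasDerivAt_id (θ : ℂ)).mul_const Complex.I).cexp
    simpa using this
  have d1 := (F.hasDerivAt w).comp (θ : ℂ) dE
  have d2 := (dE.pow q).mul (((h.map Complex.ofRealHom).hasDerivAt (Complex.cos θ)).comp (θ : ℂ)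
    (Complex.hasDerivAt_cos θ))
  have e := d1.unique (d2.congr_of_eventuallyEq (Filter.Eventually.of_forall fun t => by
    simpa using hF t))
  have ev : ∀ p : ℝ[X], (p.map Complex.ofRealHom).eval (Complex.cos θ) = ((p.eval x : ℝ) : ℂ) := by
    intro p
    have := eval_map_apply (p := p) Complex.ofRealHom x
    rw [← Complex.ofReal_cos, hcos]
    simpa using this
  have e' : F.derivative.eval w * (w * Complex.I) =
      w ^ q * (((-(h.derivative.eval x * Real.sqrt (1 - x ^ 2)) : ℝ) : ℂ) +
        ((q * h.eval x : ℝ) : ℂ) * Complex.I) := by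
    rw [e]
    simp only [Function.comp, derivative_map, ev, ← Complex.ofReal_sin, hsin, ← hw]
    obtain ⟨n, rfl⟩ : ∃ n, q = n + 1 := ⟨q - 1, by omega⟩
    simp only [Nat.add_sub_cancel]
    push_cast
    simp only [pow_succ]
    simp [← hw]
    ring
  have en := congrArg norm e'
  rw [norm_mul, norm_mul, norm_mul, norm_pow, hwn, Complex.norm_I, one_pow, one_mul, one_mul,
    mul_one] at en
  have hre := Complex.abs_re_le_norm (((-(h.derivative.eval x * Real.sqrt (1 - x ^ 2)) : ℝ) : ℂ) +
        ((q * h.eval x : ℝ) : ℂ) * Complex.I)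
  rw [← en] at hre
  have : |h.derivative.eval x| * Real.sqrt (1 - x ^ 2) = |((((-(h.derivative.eval x * Real.sqrt (1 - x ^ 2)) : ℝ) : ℂ) +
        ((q * h.eval x : ℝ) : ℂ) * Complex.I)).re| := by
    rw [Complex.add_re, Complex.ofReal_re, Complex.re_ofReal_mul, Complex.I_re, mul_zero, add_zero,
      abs_neg, abs_mul, abs_of_nonneg (Real.sqrt_nonneg _)]
  rw [this]
  refine hre.trans (hb.trans_eq ?_)
  push_cast; ring

open Polynomial in
lemma aux_unit (q : ℕ) (h : ℝ[X]) (hq : h.natDegree ≤ q) (m : ℕ) (hm : 1 ≤ m)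
    (x : ℝ) (hx : |x| < 1) (B : ℝ) (hB : ∀ y : ℝ, |y| ≤ 1 → |h.eval y| ≤ B) :
    |(derivative^[m] h).eval x| ≤ (2 * (q : ℝ) / Real.sqrt (1 - x ^ 2)) ^ m * B := by
  have hB0 : 0 ≤ B := (abs_nonneg _).trans (hB 0 (by simp))
  have hs : 0 < Real.sqrt (1 - x ^ 2) := by
    apply Real.sqrt_pos.2
    have := (sq_lt_one_iff_abs_lt_one x).2 hx
    linarith
  rcases Nat.eq_zero_or_pos q with rfl | hq1
  · rw [iterate_derivative_eq_zero (by omega)]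
    simp only [eval_zero, abs_zero]
    positivity
  rcases Nat.lt_or_ge m 2 with h1 | h2
  · obtain rfl : m = 1 := by omega
    have := aux_one q h hq hq1 B hB x hx
    simp only [Function.iterate_one, pow_one]
    rw [div_mul_eq_mul_div, le_div_iff₀ hs]
    exact this
  · have hq0 : (0 : ℝ) < q := by exact_mod_cast hq1
    have hm0 : (0 : ℝ) < m := by exact_mod_cast hm
    set s := Real.sqrt (1 - x ^ 2) with hsd
    have hR : 0 < m / q * s := by positivity
    have hC := Complex.norm_iteratedDeriv_le_of_forall_mem_sphere_norm_le (c := (x : ℂ))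
      (f := fun z => (h.map Complex.ofRealHom).eval z) (C := Real.exp m * B) m hR
      ((h.map Complex.ofRealHom).differentiable.diffContOnCl) (by
        intro z hz
        obtain ⟨t, rfl⟩ := Complex.cos_surjective z
        have hz' : ‖Complex.cos t - x‖ = m / q * s := by simpa [dist_eq_norm] using hz
        have hd := aux_dist x hx.le t
        rw [hz'] at hd
        have ht := le_of_mul_le_mul_right hd hs
        refine (aux_walsh q h hq B hB t).trans ?_
        gcongr
        rw [le_div_iff₀ hq0] at ht
        linarith)
    rw [aux_iter] at hC
    have e : (derivative^[m] (h.map Complex.ofRealHom)).eval (x : ℂ) =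
        (((derivative^[m] h).eval x : ℝ) : ℂ) := by
      rw [iterate_derivative_map]
      have := eval_map_apply (p := derivative^[m] h) Complex.ofRealHom x
      simpa using this
    simp only [e, Complex.norm_real, Real.norm_eq_abs] at hC
    refine hC.trans ?_
    rw [div_le_iff₀ (by positivity)]
    calc (m.factorial : ℝ) * (Real.exp m * B) = (m.factorial * Real.exp m) * B := by ring
      _ ≤ (2 * m) ^ m * B := by gcongr; exact aux_fact m h2
      _ = (2 * q / s) ^ m * (m / q * s) ^ m * B := by
        rw [← mul_pow]; congr 2; field_simp
      _ = _ := by ring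


/-- **Bernstein's inequality for higher derivatives.**  If `h` is a real polynomial of
degree at most `q` bounded by `B` on `[-δ, δ]`, then for `|x| < δ` and `m ≥ 1`,
`|h^(m)(x)| ≤ (2q / (δ √(1 - (x/δ)²)))^m * B`. -/
theorem stmt_2 (q : ℕ) (h : Polynomial ℝ) (hq : h.natDegree ≤ q)
    (m : ℕ) (hm : 1 ≤ m) (δ : ℝ) (hδ : 0 < δ) (x : ℝ) (hx : |x| < δ)
    (B : ℝ) (hB : ∀ y : ℝ, |y| ≤ δ → |h.eval y| ≤ B) :
    |iteratedDeriv m (fun y => h.eval y) x| ≤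
      (2 * (q : ℝ) / (δ * Real.sqrt (1 - (x / δ) ^ 2))) ^ m * B := by
  have key := aux_unit q (h.comp (Polynomial.C δ * Polynomial.X))
    (by
      refine Polynomial.natDegree_comp_le.trans ?_
      have : (Polynomial.C δ * Polynomial.X).natDegree ≤ 1 := by compute_degree
      calc _ ≤ h.natDegree * 1 := by gcongr
        _ ≤ q := by simpa using hq) m hm (x / δ)
    (by rwa [abs_div, abs_of_pos hδ, div_lt_one hδ]) B
    (by
      intro y hy
      have : |δ * y| ≤ δ := by
        rw [abs_mul, abs_of_pos hδ]
        nlinarith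
      simpa using hB _ this)
  have e := congrFun (aux_iter (h.comp (Polynomial.C δ * Polynomial.X)) m) (x / δ)
  have e2 : (fun y => (h.comp (Polynomial.C δ * Polynomial.X)).eval y) =
      fun y => (fun y => h.eval y) (δ * y) := by
    funext y; simp
  rw [e2, iteratedDeriv_comp_const_mul (f := fun y => h.eval y) (by simpa using! Polynomial.contDiff_aeval (𝕜 := ℝ) h m)] at e
  simp only [mul_div_cancel₀ x hδ.ne'] at e
  rw [← e, abs_mul, abs_of_pos (pow_pos hδ m)] at key
  have hp := pow_pos hδ m
  have e3 : (2 * (q : ℝ) / (δ * Real.sqrt (1 - (x / δ) ^ 2))) ^ m * B =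
      ((2 * (q : ℝ) / Real.sqrt (1 - (x / δ) ^ 2)) ^ m * B) / δ ^ m := by
    rw [mul_comm δ, ← div_div, div_pow _ δ]; ring
  rw [e3, le_div_iff₀ hp]
  linarith
end

section
/- Let ν be a linear functional on the space of real polynomials such that there exist constants C, K ≥ 0 and an integer m ≥ 0 with |ν(h)| ≤ C q^m sup_{|x| ≤ K} |h(x)| for all polynomials h of degree at most q and all q. Then ν extends to a compactly supported distribution on ℝ satisfying |ν(h)| ≲ max_{0 ≤ k ≤ m+1} sup_{|x| ≤ K} |h^(k)(x)| for all smooth h. -/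
open Polynomial in
lemma cheb_expand (P : Polynomial ℝ) : ∃ (s : Finset ℕ) (a : ℕ → ℝ),
    P = ∑ n ∈ s, C (a n) * Polynomial.Chebyshev.T ℝ n := by
  let b := (Polynomial.Chebyshev.chebyshevTsequence ℝ).basis (by
    intro i; simp [Polynomial.Sequence.ne_zero])
  refine ⟨(b.repr P).support, b.repr P, ?_⟩
  conv_lhs => rw [← b.linearCombination_repr P, Finsupp.linearCombination_apply, Finsupp.sum]
  refine Finset.sum_congr rfl fun n _ => ?_
  rw [Polynomial.smul_eq_C_mul, Polynomial.Sequence.basis_eq_self]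
  rfl

lemma iter_cos_sum (s : Finset ℕ) (a : ℕ → ℝ) (k : ℕ) :
    iteratedDeriv k (fun θ : ℝ => ∑ n ∈ s, a n * Real.cos (n * θ)) =
      fun θ => ∑ n ∈ s, (n : ℝ) ^ k * a n * Real.cos (n * θ + k * (Real.pi / 2)) := by
  induction k with
  | zero => simp
  | succ k ih =>
    rw [iteratedDeriv_succ, ih]
    funext θ
    apply HasDerivAt.deriv
    refine HasDerivAt.fun_sum fun n _ => ?_
    have h1 : HasDerivAt (fun θ : ℝ => (n : ℝ) * θ + k * (Real.pi / 2)) n θ := by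
      simpa using ((hasDerivAt_id θ).const_mul (n : ℝ)).add_const (k * (Real.pi / 2))
    have h2 := h1.cos.const_mul ((n : ℝ) ^ k * a n)
    have : (n : ℝ) * θ + ((k + 1 : ℕ) : ℝ) * (Real.pi / 2)
        = (n * θ + k * (Real.pi / 2)) + Real.pi / 2 := by push_cast; ring
    rw [this, Real.cos_add_pi_div_two]
    have e : (n : ℝ) ^ (k + 1) * a n * -Real.sin (n * θ + k * (Real.pi / 2))
        = (n : ℝ) ^ k * a n * (-Real.sin (n * θ + k * (Real.pi / 2)) * n) := by ring
    rw [e]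
    exact h2

lemma int_cos (j : ℤ) (hj : j ≠ 0) (φ : ℝ) :
    ∫ θ in (0 : ℝ)..(2 * Real.pi), Real.cos (j * θ + φ) = 0 := by
  have hj' : (j : ℝ) ≠ 0 := by exact_mod_cast hj
  rw [intervalIntegral.integral_comp_mul_add (fun x => Real.cos x) hj']
  rw [integral_cos]
  have : (j : ℝ) * (2 * Real.pi) + φ = φ + j * (2 * Real.pi) := by ring
  rw [this, Real.sin_add_int_mul_two_pi]
  simp

lemma orth (n p : ℕ) (hn : 1 ≤ n) (φ : ℝ) :
    ∫ θ in (0 : ℝ)..(2 * Real.pi), Real.cos (n * θ + φ) * Real.cos (p * θ + φ)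
      = if n = p then Real.pi else 0 := by
  have e : ∀ θ : ℝ, Real.cos (n * θ + φ) * Real.cos (p * θ + φ)
      = 1 / 2 * (Real.cos (((n : ℤ) - p : ℤ) * θ + 0) + Real.cos (((n : ℤ) + p : ℤ) * θ + 2 * φ)) := by
    intro θ
    rw [Real.cos_add_cos]
    push_cast
    ring_nf
    rw [show -(θ * (p : ℝ)) - φ = -(θ * p + φ) by ring, Real.cos_neg]
  simp_rw [e]
  rw [intervalIntegral.integral_const_mul, intervalIntegral.integral_add
    (Continuous.intervalIntegrable (by fun_prop) _ _)
    (Continuous.intervalIntegrable (by fun_prop) _ _), int_cos ((n : ℤ) + p) (by omega)]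
  split_ifs with h
  · subst h; simp
  · rw [int_cos _ (by omega)]; simp

lemma bessel (s : Finset ℕ) (hs : ∀ n ∈ s, 1 ≤ n) (b : ℕ → ℝ) (φ M : ℝ)
    (hM : ∀ θ : ℝ, |∑ n ∈ s, b n * Real.cos (n * θ + φ)| ≤ M) :
    ∑ n ∈ s, b n ^ 2 ≤ 2 * M ^ 2 := by
  have h1 : ∫ θ in (0 : ℝ)..(2 * Real.pi), (∑ n ∈ s, b n * Real.cos (n * θ + φ)) ^ 2
      = Real.pi * ∑ n ∈ s, b n ^ 2 := by
    have e : ∀ θ : ℝ, (∑ n ∈ s, b n * Real.cos (n * θ + φ)) ^ 2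
        = ∑ n ∈ s, ∑ p ∈ s, (b n * b p) * (Real.cos (n * θ + φ) * Real.cos (p * θ + φ)) := by
      intro θ
      rw [sq, Finset.sum_mul_sum]
      refine Finset.sum_congr rfl fun n _ => Finset.sum_congr rfl fun p _ => by ring
    simp_rw [e]
    rw [intervalIntegral.integral_finsetSum
      (fun n _ => Continuous.intervalIntegrable (by fun_prop) _ _), Finset.mul_sum]
    refine Finset.sum_congr rfl fun n hn => ?_
    rw [intervalIntegral.integral_finsetSum
      (fun n _ => Continuous.intervalIntegrable (by fun_prop) _ _)]
    simp_rw [intervalIntegral.integral_const_mul, orth n _ (hs n hn)]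
    simp [hn]
    ring
  have h2 : ∫ θ in (0 : ℝ)..(2 * Real.pi), (∑ n ∈ s, b n * Real.cos (n * θ + φ)) ^ 2
      ≤ ∫ θ in (0 : ℝ)..(2 * Real.pi), M ^ 2 := by
    apply intervalIntegral.integral_mono (by positivity)
      (Continuous.intervalIntegrable (by fun_prop) _ _)
      (Continuous.intervalIntegrable (by fun_prop) _ _)
    intro θ
    exact sq_le_sq' (abs_le.1 (hM θ)).1 (abs_le.1 (hM θ)).2
  rw [h1, intervalIntegral.integral_const] at h2
  simp only [smul_eq_mul, sub_zero] at h2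
  nlinarith [Real.pi_pos]

lemma comp_bound (f : ℝ → ℝ) (hf : ContDiff ℝ (⊤ : ℕ∞) f) (K B : ℝ) (hK : 0 ≤ K) (N : ℕ)
    (hB : ∀ k ≤ N, ∀ x : ℝ, |x| ≤ K → |iteratedDeriv k f x| ≤ B) (θ : ℝ) :
    |iteratedDeriv N (fun θ => f (K * Real.cos θ)) θ| ≤ N.factorial * B * (max 1 K) ^ N := by
  have := norm_iteratedFDeriv_comp_le (𝕜 := ℝ) (g := f) (f := fun θ : ℝ => K * Real.cos θ) (n := N)
    (N := ((⊤ : ℕ∞) : WithTop ℕ∞)) (C := B) (D := max 1 K)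
    hf (contDiff_const.mul Real.contDiff_cos) (by exact_mod_cast le_top) θ ?_ ?_
  · rw [norm_iteratedFDeriv_eq_norm_iteratedDeriv] at this
    exact this
  · intro i hi
    rw [norm_iteratedFDeriv_eq_norm_iteratedDeriv]
    refine hB i hi _ ?_
    rw [abs_mul, abs_of_nonneg hK]
    exact mul_le_of_le_one_right hK (Real.abs_cos_le_one θ)
  · intro i hi _
    rw [norm_iteratedFDeriv_eq_norm_iteratedDeriv, iteratedDeriv_const_mul_field, norm_mul,
      Real.norm_eq_abs, Real.norm_eq_abs, abs_of_nonneg hK]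
    calc K * |iteratedDeriv i Real.cos θ| ≤ K * 1 := by
          gcongr; exact Real.abs_iteratedDeriv_cos_le_one i θ
      _ ≤ max 1 K := by simp
      _ ≤ (max 1 K) ^ i := le_self_pow₀ (le_max_left _ _) (by omega)

lemma iter_cheb_bound (s : Finset ℕ) (a : ℕ → ℝ) (m : ℕ) (M : ℝ) (hM0 : 0 ≤ M)
    (hM : ∀ θ : ℝ, |iteratedDeriv (m + 1) (fun θ : ℝ => ∑ n ∈ s, a n * Real.cos (n * θ)) θ| ≤ M) :
    ∑ n ∈ s with 1 ≤ n, (n : ℝ) ^ m * |a n| ≤ Real.sqrt (∑' n : ℕ, 1 / (n : ℝ) ^ 2) * (2 * M) := by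
  set t := s.filter (fun n => 1 ≤ n) with ht
  have ht1 : ∀ n ∈ t, 1 ≤ n := fun n hn => (Finset.mem_filter.1 hn).2
  have hb := bessel t ht1 (fun n => (n : ℝ) ^ (m + 1) * a n) ((m + 1 : ℕ) * (Real.pi / 2)) M (by
    intro θ
    have := hM θ
    rw [iter_cos_sum] at this
    convert this using 2
    apply Finset.sum_subset (Finset.filter_subset _ _)
    intro n hn hn'
    have : n = 0 := by
      by_contra h
      exact hn' (Finset.mem_filter.2 ⟨hn, by omega⟩)
    simp [this])
  have hS : ∑ n ∈ t, (1 / (n : ℝ)) ^ 2 ≤ ∑' n : ℕ, 1 / (n : ℝ) ^ 2 := by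
    simp_rw [one_div_pow]
    exact (Real.summable_one_div_nat_pow.2 (by norm_num : 1 < 2)).sum_le_tsum t
      (fun _ _ => by positivity)
  have hcs := Finset.sum_mul_sq_le_sq_mul_sq t (fun n => 1 / (n : ℝ))
    (fun n => (n : ℝ) ^ (m + 1) * |a n|)
  have e : ∑ n ∈ t, 1 / (n : ℝ) * ((n : ℝ) ^ (m + 1) * |a n|) = ∑ n ∈ t, (n : ℝ) ^ m * |a n| := by
    refine Finset.sum_congr rfl fun n hn => ?_
    have : (n : ℝ) ≠ 0 := by have := ht1 n hn; positivity
    field_simp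
    ring
  rw [e] at hcs
  simp_rw [mul_pow, sq_abs] at hcs hb
  set S := ∑' n : ℕ, 1 / (n : ℝ) ^ 2
  have hS0 : 0 ≤ S := tsum_nonneg fun _ => by positivity
  apply abs_le_of_sq_le_sq' _ (by positivity) |>.2
  rw [mul_pow, Real.sq_sqrt hS0]
  refine hcs.trans ?_
  refine mul_le_mul hS (hb.trans ?_) (Finset.sum_nonneg fun _ _ => by positivity) hS0
  nlinarith

lemma poly_smooth (h : Polynomial ℝ) : ContDiff ℝ (⊤ : ℕ∞) (fun x => h.eval x) := by
  simpa using h.contDiff_aeval (𝕜 := ℝ) (⊤ : ℕ∞)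

open Polynomial in
lemma poly_bound (ν : Polynomial ℝ →ₗ[ℝ] ℝ) (C K : ℝ) (hC : 0 ≤ C) (hK : 0 ≤ K) (m : ℕ)
    (hν : ∀ q : ℕ, 1 ≤ q → ∀ h : Polynomial ℝ, h.natDegree ≤ q →
      ∀ B : ℝ, (∀ x : ℝ, |x| ≤ K → |h.eval x| ≤ B) → |ν h| ≤ C * (q : ℝ) ^ m * B) :
    ∃ C' : ℝ, 0 ≤ C' ∧ ∀ h : Polynomial ℝ, ∀ B : ℝ,
      (∀ k ≤ m + 1, ∀ x : ℝ, |x| ≤ K → |iteratedDeriv k (fun x => h.eval x) x| ≤ B) →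
          |ν h| ≤ C' * B := by
  rcases hK.eq_or_lt with rfl | hKpos
  · refine ⟨|ν 1|, abs_nonneg _, fun h B hB => ?_⟩
    have h0 := hν (max 1 h.natDegree) (le_max_left _ _) (h - Polynomial.C (h.eval 0))
      (by simp) 0 (by
        intro x hx
        have : x = 0 := abs_nonpos_iff.1 hx
        simp [this])
    rw [mul_zero, abs_nonpos_iff, map_sub, sub_eq_zero] at h0
    have h1 := hB 0 (by omega) 0 (by simp)
    rw [iteratedDeriv_zero] at h1
    rw [h0, ← mul_one (Polynomial.C _), ← Polynomial.smul_eq_C_mul, map_smul, smul_eq_mul, abs_mul,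
      mul_comm]
    gcongr
  · set S := Real.sqrt (∑' n : ℕ, 1 / (n : ℝ) ^ 2)
    set L : ℝ := ((m + 1).factorial : ℝ) * (max 1 K) ^ (m + 1)
    have hL : 0 ≤ L := by positivity
    have hS : 0 ≤ S := Real.sqrt_nonneg _
    refine ⟨C * (1 + 4 * S * L), by positivity, fun h B hB => ?_⟩
    have hB0 : 0 ≤ B := (abs_nonneg _).trans (hB 0 (by omega) 0 (by simpa using hK))
    obtain ⟨s, a, ha⟩ := cheb_expand (h.comp (Polynomial.C K * X))
    have hev : ∀ y : ℝ, h.eval (K * y) = ∑ n ∈ s, a n * (Polynomial.Chebyshev.T ℝ n).eval y := by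
      intro y
      have := congrArg (Polynomial.eval y) ha
      simpa [Polynomial.eval_finsetSum] using this
    have hcos : (fun θ : ℝ => h.eval (K * Real.cos θ))
        = fun θ => ∑ n ∈ s, a n * Real.cos (n * θ) := by
      funext θ
      rw [hev]
      refine Finset.sum_congr rfl fun n _ => ?_
      rw [Polynomial.Chebyshev.T_real_cos]; simp
    have hM : ∀ θ : ℝ,
        |iteratedDeriv (m + 1) (fun θ : ℝ => ∑ n ∈ s, a n * Real.cos (n * θ)) θ| ≤ L * B := by
      intro θ
      have := comp_bound (fun x => h.eval x) (poly_smooth h) K B hK (m + 1) hB θ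
      rw [hcos] at this
      refine this.trans (le_of_eq ?_)
      simp only [L]; ring
    have hsum := iter_cheb_bound s a m (L * B) (by positivity) hM
    set t := s.filter (fun n => 1 ≤ n) with ht
    have ht1 : ∀ n ∈ t, 1 ≤ n := fun n hn => (Finset.mem_filter.1 hn).2
    set Q : ℕ → Polynomial ℝ := fun n => (Polynomial.Chebyshev.T ℝ n).comp (Polynomial.C K⁻¹ * X)
    have hQ : h = ∑ n ∈ s, Polynomial.C (a n) * Q n := by
      apply Polynomial.funext
      intro x
      have := hev (K⁻¹ * x)
      rw [mul_inv_cancel_left₀ hKpos.ne'] at this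
      rw [this, Polynomial.eval_finsetSum]
      simp [Q]
    have hQ1 : ∀ n x, |x| ≤ K → |(Q n).eval x| ≤ 1 := by
      intro n x hx
      simp only [Q, eval_comp, eval_mul, eval_C, eval_X]
      apply Polynomial.Chebyshev.abs_eval_T_real_le_one
      rw [abs_mul, abs_inv, abs_of_pos hKpos, inv_mul_le_iff₀ hKpos]
      simpa using hx
    have hQν : ∀ n, 1 ≤ n → |ν (Q n)| ≤ C * (n : ℝ) ^ m := by
      intro n hn
      have := hν n hn (Q n) (by
        refine natDegree_comp_le.trans ?_
        rw [Polynomial.Chebyshev.natDegree_T, natDegree_C_mul_X _ (inv_ne_zero hKpos.ne')]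
        simp) 1 (hQ1 n)
      simpa using this
    have hQ0 : Q 0 = 1 := by simp [Q]
    have hν0 : |ν (Q 0)| ≤ C := by
      have := hν 1 le_rfl (Q 0) (by simp [hQ0]) 1 (hQ1 0)
      simpa using this
    -- separate the zeroth coefficient
    set a0 : ℝ := if 0 ∈ s then a 0 else 0 with ha0
    have split : ∀ F : ℕ → ℝ, ∑ n ∈ s, a n * F n = a0 * F 0 + ∑ n ∈ t, a n * F n := by
      intro F
      by_cases h0 : 0 ∈ s
      · have : t = s.erase 0 := by
          ext n; simp [ht, Nat.one_le_iff_ne_zero, and_comm]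
        rw [this, ← Finset.add_sum_erase s _ h0]
        simp [ha0, h0]
      · have : t = s := by
          apply Finset.filter_true_of_mem
          intro n hn
          rcases Nat.eq_zero_or_pos n with rfl | h
          · exact absurd hn h0
          · exact h
        rw [this]; simp [ha0, h0]
    have hsumt : ∑ n ∈ t, |a n| ≤ S * (2 * (L * B)) := by
      refine le_trans (Finset.sum_le_sum fun n hn => ?_) hsum
      have : (1 : ℝ) ≤ (n : ℝ) ^ m := one_le_pow₀ (by exact_mod_cast ht1 n hn)
      nlinarith [abs_nonneg (a n)]
    have ha0b : |a0| ≤ B + S * (2 * (L * B)) := by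
      have h1 := hB 0 (by omega) K (by rw [abs_of_nonneg hK])
      rw [iteratedDeriv_zero] at h1
      have h2 := congrFun hcos 0
      simp only [Real.cos_zero, mul_one, mul_zero] at h2
      have h3 := split (fun _ => 1)
      simp only [mul_one] at h3
      have : a0 = h.eval K - ∑ n ∈ t, a n := by rw [h2, h3]; ring
      rw [this]
      calc _ ≤ |h.eval K| + |∑ n ∈ t, a n| := abs_sub _ _
        _ ≤ _ := add_le_add h1 ((Finset.abs_sum_le_sum_abs _ _).trans hsumt)
    have hνh : ν h = a0 * ν (Q 0) + ∑ n ∈ t, a n * ν (Q n) := by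
      rw [← split (fun n => ν (Q n))]
      conv_lhs => rw [hQ]
      rw [map_sum]
      refine Finset.sum_congr rfl fun n _ => ?_
      rw [← Polynomial.smul_eq_C_mul, map_smul, smul_eq_mul]
    have ht2 : |∑ n ∈ t, a n * ν (Q n)| ≤ C * (S * (2 * (L * B))) := by
      refine (Finset.abs_sum_le_sum_abs _ _).trans (le_trans ?_ (mul_le_mul_of_nonneg_left hsum hC))
      rw [Finset.mul_sum]
      refine Finset.sum_le_sum fun n hn => ?_
      rw [abs_mul]
      calc |a n| * |ν (Q n)| ≤ |a n| * (C * (n : ℝ) ^ m) := by gcongr; exact hQν n (ht1 n hn)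
        _ = _ := by ring
    rw [hνh]
    calc _ ≤ |a0 * ν (Q 0)| + |∑ n ∈ t, a n * ν (Q n)| := abs_add_le _ _
      _ ≤ (B + S * (2 * (L * B))) * C + C * (S * (2 * (L * B))) := by
          rw [abs_mul]; gcongr
      _ = _ := by ring

/-- The space of smooth functions. -/
def smoothSub : Submodule ℝ (ℝ → ℝ) where
  carrier := {f | ContDiff ℝ (⊤ : ℕ∞) f}
  add_mem' := by
    intro a b ha hb
    have ha' : ContDiff ℝ (⊤ : ℕ∞) a := ha
    have hb' : ContDiff ℝ (⊤ : ℕ∞) b := hb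
    exact ha'.add hb'
  zero_mem' := by
    change ContDiff ℝ (⊤ : ℕ∞) (fun _ : ℝ => (0 : ℝ))
    exact contDiff_const
  smul_mem' := by
    intro c f hf
    have hf' : ContDiff ℝ (⊤ : ℕ∞) f := hf
    exact hf'.const_smul c

theorem stmt_7 (ν : Polynomial ℝ →ₗ[ℝ] ℝ) (C K : ℝ) (hC : 0 ≤ C) (hK : 0 ≤ K) (m : ℕ)
    (hν : ∀ q : ℕ, 1 ≤ q → ∀ h : Polynomial ℝ, h.natDegree ≤ q →
      ∀ B : ℝ, (∀ x : ℝ, |x| ≤ K → |h.eval x| ≤ B) → |ν h| ≤ C * (q : ℝ) ^ m * B) :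
    ∃ (ν' : (ℝ → ℝ) →ₗ[ℝ] ℝ) (C' : ℝ), 0 ≤ C' ∧
      (∀ h : Polynomial ℝ, ν' (fun x => h.eval x) = ν h) ∧
      ∀ f : ℝ → ℝ, ContDiff ℝ (⊤ : ℕ∞) f →
        ∀ B : ℝ, (∀ k ≤ m + 1, ∀ x : ℝ, |x| ≤ K → |iteratedDeriv k f x| ≤ B) →
          |ν' f| ≤ C' * B := by
  obtain ⟨C', hC', hb⟩ := poly_bound ν C K hC hK m hν
  let ι := Fin (m + 2) × Set.Icc (-K) K
  have : Nonempty ι := ⟨(0, ⟨0, by simpa using hK⟩)⟩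
  let p : smoothSub → ℝ := fun f => ⨆ i : ι, |iteratedDeriv i.1 f.1 i.2|
  have hbdd : ∀ f : smoothSub, BddAbove (Set.range fun i : ι => |iteratedDeriv i.1 f.1 i.2|) := by
    intro f
    have : CompactSpace ι := inferInstance
    apply IsCompact.bddAbove
    apply isCompact_range
    rw [continuous_prod_of_discrete_left]
    intro k
    have hf : ContDiff ℝ (⊤ : ℕ∞) f.1 := f.2
    exact ((hf.continuous_iteratedDeriv k (by exact_mod_cast le_top)).comp
      continuous_subtype_val).abs
  have hle : ∀ (f : smoothSub) (k : ℕ), k ≤ m + 1 → ∀ x : ℝ, |x| ≤ K →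
      |iteratedDeriv k f.1 x| ≤ p f := by
    intro f k hk x hx
    exact le_ciSup (hbdd f) ((⟨k, by omega⟩, ⟨x, abs_le.1 hx⟩) : ι)
  have hp_le : ∀ (f : smoothSub) (B : ℝ),
      (∀ k ≤ m + 1, ∀ x : ℝ, |x| ≤ K → |iteratedDeriv k f.1 x| ≤ B) → p f ≤ B := by
    intro f B hB
    apply ciSup_le
    rintro ⟨k, x⟩
    exact hB k (by omega) x (abs_le.2 x.2)
  have hAt : ∀ (f : smoothSub) (k : ℕ) (x : ℝ), ContDiffAt ℝ k f.1 x := by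
    intro f k x
    have hf : ContDiff ℝ (⊤ : ℕ∞) f.1 := f.2
    exact (hf.of_le (by exact_mod_cast le_top)).contDiffAt
  have p_add : ∀ f g, p (f + g) ≤ p f + p g := by
    intro f g
    apply hp_le
    intro k hk x hx
    have e : iteratedDeriv k (f + g).1 x = iteratedDeriv k f.1 x + iteratedDeriv k g.1 x :=
      iteratedDeriv_add (hAt f k x) (hAt g k x)
    rw [e]
    exact (abs_add_le _ _).trans (add_le_add (hle f k hk x hx) (hle g k hk x hx))
  have p_hom : ∀ c : ℝ, 0 < c → ∀ f, p (c • f) = c * p f := by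
    intro c hc f
    simp only [p]
    rw [Real.mul_iSup_of_nonneg hc.le]
    congr 1
    funext i
    have e : iteratedDeriv i.1 (c • f).1 i.2 = c * iteratedDeriv i.1 f.1 i.2 :=
      iteratedDeriv_const_smul_field c f.1
    rw [e, abs_mul, abs_of_pos hc]
  let J : Polynomial ℝ →ₗ[ℝ] smoothSub :=
    { toFun := fun h => ⟨fun x => h.eval x, (poly_smooth h)⟩
      map_add' := fun a b => by ext x; simp
      map_smul' := fun c a => by ext x; simp }
  have hJ : Function.Injective J := by
    intro a b hab
    apply Polynomial.funext
    intro x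
    exact congrFun (congrArg Subtype.val hab) x
  let e := LinearEquiv.ofInjective J hJ
  let φ : smoothSub →ₗ.[ℝ] ℝ := ⟨LinearMap.range J, ν ∘ₗ e.symm.toLinearMap⟩
  obtain ⟨g, hg1, hg2⟩ := exists_extension_of_le_sublinear φ (fun f => C' * p f)
    (fun c hc f => by simp only [p_hom c hc f]; ring)
    (fun f g => by nlinarith [p_add f g])
    (by
      rintro ⟨_, h, rfl⟩
      have h1 : φ ⟨J h, h, rfl⟩ = ν h := by
        change ν (e.symm (e h)) = ν h
        rw [e.symm_apply_apply]
      rw [h1]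
      exact (le_abs_self _).trans (hb h _ (hle (J h))))
  obtain ⟨ν', hν'⟩ := g.exists_extend
  have hν'' : ∀ f : smoothSub, ν' f.1 = g f := fun f => LinearMap.congr_fun hν' f
  refine ⟨ν', C', hC', fun h => ?_, fun f hf B hB => ?_⟩
  · rw [show (fun x => h.eval x) = (J h).1 from rfl, hν'']
    rw [hg1 ⟨J h, h, rfl⟩]
    change ν (e.symm (e h)) = ν h
    rw [e.symm_apply_apply]
  · let F : smoothSub := ⟨f, hf⟩
    rw [show f = F.1 from rfl, hν'']
    have hpB : C' * p F ≤ C' * B := mul_le_mul_of_nonneg_left (hp_le F B hB) hC'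
    rw [abs_le]
    constructor
    · have h1 := hg2 (-F)
      have h2 : p (-F) ≤ B := by
        apply hp_le
        intro k hk x hx
        have e : iteratedDeriv k (-F).1 x = - iteratedDeriv k F.1 x := iteratedDeriv_neg k F.1 x
        rw [e, abs_neg]
        exact hB k hk x hx
      rw [map_neg] at h1
      nlinarith [mul_le_mul_of_nonneg_left h2 hC']
    · exact (hg2 F).trans hpB
end

section
/- Let p ≥ q be positive integers, f a real polynomial of degree at most p, g_q(x) = ∏_{j=1}^q (1 − (jx)²)^⌊q/j⌋, and r = f/g_q. Then for all m ≥ 1, (1/m!) · sup_{|x| ≤ 1/(cp)} |r^(m)(x)| ≤ (e^(−p) (Cp)^m + (Cp)^(2m)/m!) · sup over the set I_q = {1/N : N ∈ ℤ, |N| > q} of |r|, where c, C are universal constants. -/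
/-- The Weingarten denominator `g_q(x) = ∏_{j=1}^q (1 - (jx)²)^⌊q/j⌋`. -/
noncomputable def gq (q : ℕ) (x : ℝ) : ℝ :=
  ∏ j ∈ Finset.Icc 1 q, (1 - ((j : ℝ) * x) ^ 2) ^ (q / j)


section

open Complex Metric

lemma upper (F : ℂ → ℂ) (κ S : ℝ) 
    (hd : ∀ z : ℂ, ‖z‖ ≤ 1 → DifferentiableAt ℂ F z)
    (hb : ∀ x : ℝ, |x| ≤ 1/2 → ‖F x‖ ≤ S)
    (hs : ∀ z : ℂ, |z.re| = 1/2 → |z.im| ≤ 1/4 → ‖F z‖ ≤ S)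
    (ht : ∀ z : ℂ, |z.re| ≤ 1/2 → |z.im| = 1/4 → ‖F z‖ ≤ S * Real.exp (κ/4))
    (hκ : 0 ≤ κ)
    (z : ℂ) (hz : |z.re| ≤ 1/2) (hz0 : 0 ≤ z.im) (hz1 : z.im ≤ 1/4) :
    ‖F z‖ ≤ S * Real.exp (κ * z.im) := by
  have hS : 0 ≤ S := (norm_nonneg _).trans (hb 0 (by norm_num))
  have hn : ∀ w : ℂ, ‖cexp (I * κ * w)‖ = Real.exp (-(κ * w.im)) := by
    intro w; rw [Complex.norm_exp]; congr 1; simp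
  have hcl : closure (Set.Ioo (-(1/2):ℝ) (1/2) ×ℂ Set.Ioo (0:ℝ) (1/4)) = Set.Icc (-(1/2):ℝ) (1/2) ×ℂ Set.Icc (0:ℝ) (1/4) := by
    rw [Complex.closure_reProdIm, closure_Ioo (by norm_num), closure_Ioo (by norm_num)]
  have hbd : Bornology.IsBounded (Set.Ioo (-(1/2):ℝ) (1/2) ×ℂ Set.Ioo (0:ℝ) (1/4)) :=
    (Metric.isBounded_Ioo _ _).reProdIm (Metric.isBounded_Ioo _ _)
  have hsmall : ∀ w ∈ Set.Icc (-(1/2):ℝ) (1/2) ×ℂ Set.Icc (0:ℝ) (1/4), ‖w‖ ≤ 1 := by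
    intro w hw
    rw [Complex.mem_reProdIm] at hw
    have := Complex.norm_le_abs_re_add_abs_im w
    have h1 : |w.re| ≤ 1/2 := abs_le.2 hw.1
    have h2 : |w.im| ≤ 1/4 := abs_le.2 ⟨by linarith [hw.2.1], hw.2.2⟩
    linarith
  have key := Complex.norm_le_of_forall_mem_frontier_norm_le (f := fun w => F w * cexp (I * κ * w)) (C := S) hbd
    (by
      apply DifferentiableOn.diffContOnCl
      rw [hcl]
      intro w hw
      exact ((hd w (hsmall w hw)).mul (by fun_prop)).differentiableWithinAt)
    (by
      intro w hw
      rw [norm_mul, hn]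
      have hwc : w ∈ Set.Icc (-(1/2):ℝ) (1/2) ×ℂ Set.Icc (0:ℝ) (1/4) := hcl ▸ frontier_subset_closure hw
      rw [Complex.mem_reProdIm] at hwc
      obtain ⟨⟨h1, h2⟩, h3, h4⟩ := hwc
      have hni : w ∉ (Set.Ioo (-(1/2):ℝ) (1/2) ×ℂ Set.Ioo (0:ℝ) (1/4)) := by
        have := hw.2
        rwa [(IsOpen.reProdIm isOpen_Ioo isOpen_Ioo).interior_eq] at this
      have hexp : Real.exp (-(κ * w.im)) ≤ 1 := Real.exp_le_one_iff.2 (by nlinarith)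
      rcases eq_or_lt_of_le h3 with h3 | h3
      · have : w = ((w.re : ℝ) : ℂ) := by apply Complex.ext <;> simp [← h3]
        have h := hb w.re (abs_le.2 ⟨h1, h2⟩)
        rw [← this] at h
        calc _ ≤ S * 1 := by gcongr
          _ = S := mul_one _
      rcases eq_or_lt_of_le h4 with h4 | h4
      · have h := ht w (abs_le.2 ⟨h1, h2⟩) (by rw [h4]; norm_num)
        calc _ ≤ S * Real.exp (κ/4) * Real.exp (-(κ * w.im)) := by gcongr
          _ = S := by rw [mul_assoc, ← Real.exp_add, h4]; ring_nf; simp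
      have h : |w.re| = 1/2 := by
        by_contra hne
        apply hni
        have : |w.re| < 1/2 := lt_of_le_of_ne (abs_le.2 ⟨h1, h2⟩) hne
        rw [Complex.mem_reProdIm]
        exact ⟨abs_lt.1 this, h3, h4⟩
      have h := hs w h (abs_le.2 ⟨by linarith, h4.le⟩)
      calc _ ≤ S * 1 := by gcongr
        _ = S := mul_one _)
    (z := z) (by rw [hcl, Complex.mem_reProdIm]; exact ⟨abs_le.1 hz, hz0, hz1⟩)
  rw [norm_mul, hn, Real.exp_neg] at key
  have := Real.exp_pos (κ * z.im)
  rwa [← div_eq_mul_inv, div_le_iff₀ this] at key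

lemma band (F : ℂ → ℂ) (κ S : ℝ) 
    (hd : ∀ z : ℂ, ‖z‖ ≤ 1 → DifferentiableAt ℂ F z)
    (hb : ∀ x : ℝ, |x| ≤ 1/2 → ‖F x‖ ≤ S)
    (hs : ∀ z : ℂ, |z.re| = 1/2 → |z.im| ≤ 1/4 → ‖F z‖ ≤ S)
    (ht : ∀ z : ℂ, |z.re| ≤ 1/2 → |z.im| = 1/4 → ‖F z‖ ≤ S * Real.exp (κ/4))
    (hκ : 0 ≤ κ)
    (z : ℂ) (hz : |z.re| ≤ 1/2) (hz1 : |z.im| ≤ 1/4) :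
    ‖F z‖ ≤ S * Real.exp (κ * |z.im|) := by
  rw [abs_le] at hz1
  rcases le_total 0 z.im with h | h
  · rw [abs_of_nonneg h]
    exact upper F κ S hd hb hs ht hκ z hz h hz1.2
  · rw [abs_of_nonpos h]
    have := upper (fun w => F (-w)) κ S 
      (by
        intro w hw
        have h1 : DifferentiableAt ℂ F (-w) := hd (-w) (by simpa using hw)
        exact h1.comp w differentiable_neg.differentiableAt)
      (by intro x hx; simpa using hb (-x) (by simpa using hx))
      (by intro x hx hx'; exact hs (-x) (by simpa using hx) (by simpa using hx'))
      (by intro x hx hx'; exact ht (-x) (by simpa using hx) (by simpa using hx'))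
      hκ (-z) (by simpa using hz) (by simpa using h) (by simp; linarith)
    simpa using this

lemma fill (K : ℝ) (hK : 1 ≤ K) (T : ℝ) (hT : |T| ≤ 1) :
    ∃ N : ℤ, K ≤ |(N:ℝ)| ∧ |K / N - T| ≤ 1 / K := by
  have pos : ∀ T : ℝ, 0 ≤ T → T ≤ 1 → ∃ N : ℤ, K ≤ (N:ℝ) ∧ |K / N - T| ≤ 1 / K := by
    intro T h0 h1
    have hK0 : 0 < K := by linarith
    obtain ⟨s, hs⟩ : ∃ s, s = max T (1/K) := ⟨_, rfl⟩
    have hs0 : 0 < s := by rw [hs]; exact lt_max_of_lt_right (by positivity)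
    have hs1 : s ≤ 1 := by rw [hs]; exact max_le h1 (by rw [div_le_one hK0]; exact hK)
    refine ⟨⌈K / s⌉, ?_, ?_⟩
    · refine le_trans ?_ (Int.le_ceil _)
      rw [le_div_iff₀ hs0]; nlinarith
    · have a1 := Int.le_ceil (K / s)
      have a2 := Int.ceil_lt_add_one (K / s)
      generalize (⌈K/s⌉ : ℤ) = N at *
      have hNK : K ≤ (N:ℝ) := by
        refine le_trans ?_ a1
        rw [le_div_iff₀ hs0]; nlinarith
      have hN : 0 < (N:ℝ) := by linarith
      have b1 : K / N ≤ s := by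
        rw [div_le_iff₀ hs0] at a1
        rw [div_le_iff₀ hN]; linarith
      have b0 : 0 ≤ K / N := by positivity
      rcases le_total T (1/K) with h | h
      · rw [max_eq_right h] at hs
        rw [abs_le]; constructor <;> linarith
      · rw [max_eq_left h] at hs
        subst hs
        have b2 : s - K / N ≤ 1 / K := by
          have : (N:ℝ) * s < K + s := by
            have := mul_lt_mul_of_pos_right a2 hs0
            rwa [add_mul, div_mul_cancel₀ _ hs0.ne', one_mul] at this
          have e : s - K / N = (N * s - K) / N := by field_simp
          rw [e]
          exact div_le_div₀ zero_le_one (by linarith) hK0 hNK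
        have : 0 < 1 / K := by positivity
        rw [abs_le]; constructor <;> linarith
  rw [abs_le] at hT
  rcases le_total 0 T with h | h
  · obtain ⟨N, h1, h2⟩ := pos T h hT.2
    exact ⟨N, h1.trans (le_abs_self _), h2⟩
  · obtain ⟨N, h1, h2⟩ := pos (-T) (by linarith) (by linarith)
    refine ⟨-N, by push_cast; rw [abs_neg]; exact h1.trans (le_abs_self _), ?_⟩
    push_cast
    rw [← abs_neg]
    convert h2 using 2
    rw [div_neg]; ring

lemma key (R : ℂ → ℂ) (p B : ℝ) (hp : 1 ≤ p) (hB : 0 ≤ B)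
    (hd : ∀ z : ℂ, ‖z‖ ≤ 1 → DifferentiableAt ℂ R z)
    (hR : ∀ z : ℂ, ‖z‖ ≤ 1 → ‖R z‖ ≤ B * Real.exp (6 * p))
    (hn : ∀ t : ℝ, |t| ≤ 1/4 → ∃ u : ℝ, |u - t| ≤ 1 / (1000 * p) ∧ ‖R u‖ ≤ B)
    (z : ℂ) (hz : ‖z‖ ≤ 1/4) : ‖R z‖ ≤ 2 * B * Real.exp (72 * p * ‖z‖) := by
  obtain ⟨H, hH⟩ : ∃ H : ℂ → ℂ, H = fun z => R z * cexp (-(96 * p) * z ^ 2) := ⟨_, rfl⟩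
  have hHn : ∀ w, ‖H w‖ = ‖R w‖ * Real.exp (-(96 * p) * (w.re ^ 2 - w.im ^ 2)) := by
    intro w
    rw [hH]; simp only
    rw [norm_mul, Complex.norm_exp]
    congr 2
    simp [pow_two]
  have hHd : ∀ w : ℂ, ‖w‖ ≤ 1 → DifferentiableAt ℂ H w := by
    intro w hw
    rw [hH]
    exact (hd w hw).mul (by fun_prop)
  have hnorm : ∀ w : ℂ, |w.re| ≤ 1/2 → |w.im| ≤ 1/4 → ‖w‖ ≤ 1 := by
    intro w h1 h2
    have := Complex.norm_le_abs_re_add_abs_im w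
    linarith
  have side : ∀ w : ℂ, |w.re| = 1/2 → |w.im| ≤ 1/4 → ‖H w‖ ≤ B := by
    intro w h1 h2
    have h := hR w (hnorm w h1.le h2)
    have e1 : w.re ^ 2 = 1/4 := by rw [← sq_abs, h1]; norm_num
    have e2 : w.im ^ 2 ≤ 1/16 := by rw [← sq_abs]; nlinarith [abs_nonneg w.im]
    rw [hHn]
    calc _ ≤ B * Real.exp (6 * p) * Real.exp (-(96 * p) * (w.re ^ 2 - w.im ^ 2)) := by gcongr
      _ = B * Real.exp (6 * p + -(96 * p) * (w.re ^ 2 - w.im ^ 2)) := by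
        rw [mul_assoc, ← Real.exp_add]
      _ ≤ B * 1 := by
        gcongr
        rw [Real.exp_le_one_iff]; nlinarith
      _ = B := mul_one _
  have top : ∀ w : ℂ, |w.re| ≤ 1/2 → |w.im| = 1/4 → ‖H w‖ ≤ B * Real.exp (48 * p / 4) := by
    intro w h1 h2
    have h := hR w (hnorm w h1 h2.le)
    have e2 : w.im ^ 2 = 1/16 := by rw [← sq_abs, h2]; norm_num
    rw [hHn]
    calc _ ≤ B * Real.exp (6 * p) * Real.exp (-(96 * p) * (w.re ^ 2 - w.im ^ 2)) := by gcongr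
      _ = B * Real.exp (6 * p + -(96 * p) * (w.re ^ 2 - w.im ^ 2)) := by
        rw [mul_assoc, ← Real.exp_add]
      _ ≤ _ := by
        gcongr
        nlinarith [mul_nonneg (by linarith : 0 ≤ p) (sq_nonneg w.re)]
  have bdry : ∀ S, B ≤ S → (∀ x : ℝ, |x| ≤ 1/2 → ‖H x‖ ≤ S) → ∀ w : ℂ, |w.re| ≤ 1/2 → |w.im| ≤ 1/4 →
      ‖H w‖ ≤ S * Real.exp (48 * p * |w.im|) := by
    intro S hS hb w h1 h2
    refine band H (48 * p) S hHd hb (fun w h h' => (side w h h').trans hS) (fun w h h' => (top w h h').trans ?_)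
      (by linarith) w h1 h2
    gcongr
  have real : ∀ x : ℝ, |x| ≤ 1/2 → ‖H x‖ ≤ 2 * B := by
    have hcont : ContinuousOn (fun x : ℝ => ‖H x‖) (Set.Icc (-(1/2)) (1/2)) := by
      intro x hx
      have h1 : ContinuousAt H x := (hHd x (by
        rw [Complex.norm_real, Real.norm_eq_abs]
        exact (abs_le.2 hx).trans (by norm_num))).continuousAt
      have h2 : ContinuousAt (fun x : ℝ => H x) x :=
        ContinuousAt.comp (f := fun x : ℝ => (x:ℂ)) (g := H) h1 Complex.continuous_ofReal.continuousAt
      exact h2.norm.continuousWithinAt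
    obtain ⟨x, hx, hmax⟩ := isCompact_Icc.exists_isMaxOn ⟨0, by norm_num⟩ hcont
    have hmax' : ∀ y : ℝ, |y| ≤ 1/2 → ‖H y‖ ≤ ‖H x‖ := fun y hy => hmax (abs_le.1 hy)
    suffices hs : ‖H x‖ ≤ 2 * B from fun y hy => (hmax' y hy).trans hs
    by_contra hcon
    push Not at hcon
    have hx' : |x| ≤ 1/2 := abs_le.2 hx
    have hBS : B ≤ ‖H x‖ := by linarith
    have hb := bdry ‖H x‖ hBS hmax'
    rcases le_total (1/4) |x| with h4 | h4
    · have h := hR x (by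
        rw [Complex.norm_real, Real.norm_eq_abs]
        exact hx'.trans (by norm_num))
      have : ‖H x‖ ≤ B := by
        have e1 : 1/16 ≤ x ^ 2 := by rw [← sq_abs]; nlinarith
        rw [hHn]
        simp only [ofReal_re, ofReal_im]
        calc _ ≤ B * Real.exp (6 * p) * Real.exp (-(96 * p) * (x ^ 2 - 0 ^ 2)) := by gcongr
          _ = B * Real.exp (6 * p + -(96 * p) * (x ^ 2 - 0 ^ 2)) := by
            rw [mul_assoc, ← Real.exp_add]
          _ ≤ B * 1 := by
            gcongr
            rw [Real.exp_le_one_iff]; nlinarith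
          _ = B := mul_one _
      linarith
    · obtain ⟨u, hu, hRu⟩ := hn x h4
      have hη : 1 / (1000 * p) ≤ 1/1000 := one_div_le_one_div_of_le (by norm_num) (by linarith)
      have hκ : 1 / (48 * p) ≤ 1/48 := one_div_le_one_div_of_le (by norm_num) (by linarith)
      have hη0 : 0 < 1 / (1000 * p) := by positivity
      have hκ0 : 0 < 1 / (48 * p) := by positivity
      have hHu : ‖H u‖ ≤ B := by
        rw [hHn]
        simp only [ofReal_re, ofReal_im]
        calc _ ≤ B * 1 := by
              gcongr
              rw [Real.exp_le_one_iff]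
              nlinarith [mul_nonneg (by linarith : 0 ≤ p) (sq_nonneg u)]
          _ = B := mul_one _
      have hloc : ∀ w ∈ closedBall (x:ℂ) (1 / (1000 * p)), ∀ v ∈ closedBall w (1/(48*p)),
          |v.re| ≤ 1/2 ∧ |v.im| ≤ 1/4 ∧ |v.im| ≤ 1 / (1000 * p) + 1/(48*p) := by
        intro w hw v hv
        have hvx : ‖v - x‖ ≤ 1 / (1000 * p) + 1/(48*p) := by
          rw [mem_closedBall, dist_eq_norm] at hw hv
          calc ‖v - x‖ = ‖(v - w) + (w - x)‖ := by congr 1; ring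
            _ ≤ _ := (norm_add_le _ _).trans (by linarith)
        have r1 := (Complex.abs_re_le_norm (v - x)).trans hvx
        have r2 := (Complex.abs_im_le_norm (v - x)).trans hvx
        simp only [sub_re, ofReal_re, sub_im, ofReal_im, sub_zero] at r1 r2
        refine ⟨?_, by linarith, r2⟩
        have : |v.re| ≤ |v.re - x| + |x| := by
          have := abs_add_le (v.re - x) x
          simpa using this
        linarith
      have hder : ∀ w ∈ closedBall (x:ℂ) (1 / (1000 * p)), ‖deriv H w‖ ≤ ‖H x‖ * 9 * (48 * p) := by
        intro w hw
        have := Complex.norm_deriv_le_of_forall_mem_sphere_norm_le (f := H) (c := w) (R := 1/(48*p)) (C := ‖H x‖ * 9) hκ0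
          (by
            apply DifferentiableOn.diffContOnCl
            rw [closure_ball _ hκ0.ne']
            intro v hv
            obtain ⟨h1, h2, -⟩ := hloc w hw v hv
            exact (hHd v (hnorm v h1 h2)).differentiableWithinAt)
          (by
            intro v hv
            obtain ⟨h1, h2, h3⟩ := hloc w hw v (sphere_subset_closedBall hv)
            refine (hb v h1 h2).trans ?_
            gcongr
            have e2 : Real.exp 2 ≤ 9 := by
              have : Real.exp 2 = Real.exp 1 ^ 2 := by rw [← Real.exp_nat_mul]; norm_num
              rw [this]
              have := Real.exp_one_lt_d9
              have := Real.exp_pos 1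
              nlinarith
            refine le_trans (Real.exp_le_exp.2 ?_) e2
            have : 48 * p * |v.im| ≤ 48 * p * (1 / (1000 * p) + 1/(48*p)) := by gcongr
            refine this.trans ?_
            have : 48 * p * (1 / (1000 * p) + 1/(48*p)) = 48/1000 + 1 := by field_simp
            rw [this]; norm_num)
        refine this.trans (le_of_eq ?_)
        field_simp
      have hux : ‖(u:ℂ) - x‖ ≤ 1 / (1000 * p) := by
        rw [← ofReal_sub, Complex.norm_real, Real.norm_eq_abs]; exact hu
      have mv := Convex.norm_image_sub_le_of_norm_deriv_le (𝕜 := ℂ) (f := H) (x := (u:ℂ)) (y := (x:ℂ))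
        (s := closedBall (x:ℂ) (1 / (1000 * p)))
        (by
          intro w hw
          obtain ⟨h1, h2, -⟩ := hloc w hw w (mem_closedBall_self hκ0.le)
          exact hHd w (hnorm w h1 h2)) hder (convex_closedBall _ _)
        (by rw [mem_closedBall, dist_eq_norm]; exact hux) (mem_closedBall_self hη0.le)
      have t1 := norm_sub_norm_le (H x) (H u)
      rw [norm_sub_rev] at hux
      have t2 : ‖H x‖ * 9 * (48 * p) * ‖(x:ℂ) - u‖ ≤ ‖H x‖ * 9 * (48 * p) * (1 / (1000 * p)) := by gcongr
      have t3 : ‖H x‖ * 9 * (48 * p) * (1 / (1000 * p)) = ‖H x‖ * (432/1000) := by field_simp; ring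
      have := norm_nonneg (H x)
      linarith
  have hz1 := (Complex.abs_re_le_norm z).trans hz
  have hz2 := (Complex.abs_im_le_norm z).trans hz
  have fin := bdry (2 * B) (by linarith) real z (by linarith) hz2
  rw [hHn] at fin
  have e : ‖R z‖ = ‖R z‖ * Real.exp (-(96 * p) * (z.re ^ 2 - z.im ^ 2)) * Real.exp ((96 * p) * (z.re ^ 2 - z.im ^ 2)) := by
    rw [mul_assoc, ← Real.exp_add]; simp
  rw [e]
  calc _ ≤ 2 * B * Real.exp (48 * p * |z.im|) * Real.exp ((96 * p) * (z.re ^ 2 - z.im ^ 2)) := by gcongr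
    _ = 2 * B * Real.exp (48 * p * |z.im| + (96 * p) * (z.re ^ 2 - z.im ^ 2)) := by
      rw [mul_assoc, ← Real.exp_add]
    _ ≤ _ := by
      gcongr
      have a1 : |z.im| ≤ ‖z‖ := Complex.abs_im_le_norm z
      have a2 : z.re ^ 2 - z.im ^ 2 ≤ ‖z‖ * (1/4) := by
        have : |z.re| ≤ ‖z‖ := Complex.abs_re_le_norm z
        have : z.re ^ 2 ≤ ‖z‖ * (1/4) := by rw [← sq_abs]; nlinarith [abs_nonneg z.re]
        nlinarith [sq_nonneg z.im]
      have b1 : 48 * p * |z.im| ≤ 48 * p * ‖z‖ := by gcongr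
      have b2 : (96 * p) * (z.re ^ 2 - z.im ^ 2) ≤ (96 * p) * (‖z‖ * (1/4)) := by gcongr
      linarith

lemma prod_erase (p i : ℕ) (hi : i ≤ p) :
    ∏ j ∈ (Finset.range (p+1)).erase i, |(i:ℝ) - j| = i.factorial * (p - i).factorial := by
  induction p, hi using Nat.le_induction with
  | base =>
    have : (Finset.range (i+1)).erase i = Finset.range i := by
      ext j; simp; omega
    rw [this, ← Finset.prod_range_reflect]
    simp only [Nat.sub_self, Nat.factorial_zero, Nat.cast_one, mul_one]
    rw [← Finset.prod_range_add_one_eq_factorial]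
    push_cast
    apply Finset.prod_congr rfl
    intro j hj
    rw [Finset.mem_range] at hj
    rw [Nat.sub_sub, Nat.cast_sub (by omega), abs_of_nonneg] <;> push_cast <;> [ring; skip]
    have : (0:ℝ) ≤ j := by positivity
    linarith
  | succ n hn ih =>
    have : (Finset.range (n+1+1)).erase i = insert (n+1) ((Finset.range (n+1)).erase i) := by
      ext j; simp; omega
    rw [this, Finset.prod_insert (by simp), ih, Nat.succ_sub hn, Nat.factorial_succ]
    have h : |(i:ℝ) - ((n+1 : ℕ):ℝ)| = ((n - i + 1 : ℕ) : ℝ) := by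
      rw [abs_sub_comm, Nat.cast_add (n - i), Nat.cast_sub hn, abs_of_nonneg] <;> push_cast
      · ring
      · have : (i:ℝ) ≤ n := by exact_mod_cast hn
        linarith
    rw [h]; push_cast; ring

lemma lagr (p : ℕ) (hp : 1 ≤ p) (k B : ℝ) (hk : 0 < k) (hB : 0 ≤ B) (f : Polynomial ℂ) (hf : f.natDegree ≤ p)
    (h : ∀ i : ℕ, i ≤ p → ‖f.eval ((1 / (k * (p + i)) : ℝ) : ℂ)‖ ≤ B) (z : ℂ) (hz : ‖z‖ ≤ 2 / (k * p)) :
    ‖f.eval z‖ ≤ B * Real.exp (5 * p) := by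
  have hp' : (1:ℝ) ≤ p := by exact_mod_cast hp
  have hp0 : (0:ℝ) < p := by linarith
  obtain ⟨v, hv⟩ : ∃ v : ℕ → ℂ, v = fun i : ℕ => ((1 / (k * (p + i)) : ℝ) : ℂ) := ⟨_, rfl⟩
  have hdiff : ∀ i ≤ p, ∀ j ≤ p, |(i:ℝ) - j| / (4 * k * p ^ 2) ≤ ‖v i - v j‖ := by
    intro i hi j hj
    have hi' : (i:ℝ) ≤ p := by exact_mod_cast hi
    have hj' : (j:ℝ) ≤ p := by exact_mod_cast hj
    have : v i - v j = (((j - i) / (k * (p + i) * (p + j)) : ℝ) : ℂ) := by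
      rw [hv]; simp only
      rw [← ofReal_sub]; congr 1; field_simp; ring
    rw [this, Complex.norm_real, Real.norm_eq_abs, abs_div, abs_sub_comm,
      abs_of_pos (a := k * (p + i) * (p + j)) (by positivity)]
    apply div_le_div_of_nonneg_left (abs_nonneg _) (by positivity)
    have : ((p:ℝ) + i) * (p + j) ≤ (2 * p) * (2 * p) := by gcongr <;> linarith
    nlinarith
  have hinj : Set.InjOn v (Finset.range (p+1) : Set ℕ) := by
    intro i hi j hj hij
    simp only [Finset.coe_range, Set.mem_Iio] at hi hj
    have := hdiff i (by omega) j (by omega)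
    rw [hij, sub_self, norm_zero, div_le_iff₀ (by positivity), zero_mul] at this
    have := abs_nonpos_iff.1 this
    have : (i:ℝ) = j := by linarith
    exact_mod_cast this
  have hL := Lagrange.eq_interpolate (f := f) hinj (by
    rw [Finset.card_range]
    exact lt_of_le_of_lt (Polynomial.degree_le_of_natDegree_le hf) (by exact_mod_cast Nat.lt_succ_self p))
  rw [hL, Lagrange.interpolate_apply, Polynomial.eval_finsetSum]
  have hzv : ∀ j : ℕ, ‖z - v j‖ ≤ 3 / (k * p) := by
    intro j
    have : ‖v j‖ ≤ 1 / (k * p) := by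
      rw [hv]; simp only
      rw [Complex.norm_real, Real.norm_eq_abs, abs_of_pos (by positivity)]
      apply one_div_le_one_div_of_le (by positivity)
      gcongr
      have : (0:ℝ) ≤ j := by positivity
      linarith
    calc _ ≤ 2 / (k * p) + 1 / (k * p) := (norm_sub_le _ _).trans (by linarith)
      _ = _ := by ring
  have hterm : ∀ i ∈ Finset.range (p+1), ‖(Polynomial.C (f.eval (v i)) * Lagrange.basis (Finset.range (p+1)) v i).eval z‖ ≤
      B * ((12 * p) ^ p / (i.factorial * (p-i).factorial)) := by
    intro i hi
    have hi' : i ≤ p := by rw [Finset.mem_range] at hi; omega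
    rw [Polynomial.eval_mul, Polynomial.eval_C, norm_mul]
    have h1 : ‖f.eval (v i)‖ ≤ B := by rw [hv]; exact h i hi'
    refine mul_le_mul h1 ?_ (norm_nonneg _) hB
    rw [Lagrange.basis, Polynomial.eval_prod, norm_prod]
    calc _ ≤ ∏ j ∈ (Finset.range (p+1)).erase i, (12 * p) / |(i:ℝ) - j| := by
          apply Finset.prod_le_prod (fun _ _ => norm_nonneg _)
          intro j hj
          rw [Finset.mem_erase, Finset.mem_range] at hj
          have hne : 0 < |(i:ℝ) - j| := by
            rw [abs_pos, sub_ne_zero]; exact_mod_cast hj.1.symm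
          simp only [Lagrange.basisDivisor, Polynomial.eval_mul, Polynomial.eval_C, Polynomial.eval_sub, Polynomial.eval_X,
            norm_mul, norm_inv]
          have a := hdiff i hi' j (by omega)
          have a0 : 0 < |(i:ℝ) - j| / (4 * k * p ^ 2) := by positivity
          calc _ ≤ (|(i:ℝ) - j| / (4 * k * p ^ 2))⁻¹ * (3 / (k * p)) := by
                gcongr
                exact hzv j
            _ = _ := by field_simp; norm_num
      _ = _ := by
          rw [Finset.prod_div_distrib, prod_erase p i hi', Finset.prod_const, Finset.card_erase_of_mem hi]
          simp
  calc _ ≤ ∑ i ∈ Finset.range (p+1), B * ((12 * p) ^ p / (i.factorial * (p-i).factorial) : ℝ) := norm_sum_le_of_le _ hterm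
    _ = ∑ i ∈ Finset.range (p+1), B * ((12 * p) ^ p / p.factorial) * (p.choose i : ℝ) := by
      apply Finset.sum_congr rfl
      intro i hi
      have hi' : i ≤ p := by rw [Finset.mem_range] at hi; omega
      rw [Nat.cast_choose ℝ hi']
      have := Nat.factorial_pos p
      field_simp
    _ = B * (24 ^ p * (p ^ p / p.factorial)) := by
      rw [← Finset.mul_sum, ← Nat.cast_sum, Nat.sum_range_choose]
      push_cast
      rw [mul_pow, show (24:ℝ) = 12 * 2 by norm_num, mul_pow]; ring
    _ ≤ B * (Real.exp (4 * p) * Real.exp p) := by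
      gcongr
      · have : Real.exp (4 * p) = (Real.exp 1 ^ 4) ^ p := by
          rw [← Real.exp_nat_mul, ← Real.exp_nat_mul]; push_cast; congr 1; ring
        rw [this]
        gcongr
        have := Real.exp_one_gt_d9
        calc (24:ℝ) ≤ 2.7 ^ 4 := by norm_num
          _ ≤ _ := by gcongr; linarith
      · exact Real.pow_div_factorial_le_exp _ hp0.le _
    _ = _ := by rw [← Real.exp_add]; ring_nf

lemma realpart (F : ℂ → ℂ) (r : ℝ → ℝ) (U : Set ℂ) (hU : IsOpen U) (hF : DifferentiableOn ℂ F U)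
    (h : ∀ x : ℝ, (x:ℂ) ∈ U → r x = (F x).re) (m : ℕ) :
    ∀ x : ℝ, (x:ℂ) ∈ U → iteratedDeriv m r x = (iteratedDeriv m F x).re := by
  have han : AnalyticOnNhd ℂ F U := hF.analyticOnNhd hU
  induction m with
  | zero => intro x hx; simpa using h x hx
  | succ n ih =>
    intro x hx
    rw [iteratedDeriv_succ, iteratedDeriv_succ]
    have hev : iteratedDeriv n r =ᶠ[nhds x] fun y : ℝ => (iteratedDeriv n F y).re := by
      have : ∀ᶠ y : ℝ in nhds x, (y:ℂ) ∈ U :=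
        Complex.continuous_ofReal.continuousAt.eventually (hU.mem_nhds hx)
      filter_upwards [this] with y hy using ih y hy
    rw [hev.deriv_eq]
    have h1 : DifferentiableAt ℂ (iteratedDeriv n F) x := by
      rw [iteratedDeriv_eq_iterate]
      exact ((han _ hx).iterated_deriv n).differentiableAt
    exact h1.hasDerivAt.real_of_complex.deriv

lemma gbound (p q : ℕ) (hq : 1 ≤ q) (hqp : q ≤ p) (z : ℂ) (hz : ‖z‖ ≤ 2 / (1000 * p)) :
    Real.exp (-p) ≤ ‖∏ j ∈ Finset.Icc 1 q, (1 - ((j : ℂ) * z) ^ 2) ^ (q / j)‖ := by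
  have hp0 : (1:ℝ) ≤ p := by exact_mod_cast hq.trans hqp
  have hqp' : (q:ℝ) ≤ p := by exact_mod_cast hqp
  rw [norm_prod]
  calc Real.exp (-p) ≤ Real.exp (-1) ^ q := by
        rw [← Real.exp_nat_mul]; gcongr; linarith
    _ = ∏ j ∈ Finset.Icc 1 q, Real.exp (-1) := by simp
    _ ≤ _ := by
      apply Finset.prod_le_prod (fun _ _ => (Real.exp_pos _).le)
      intro j hj
      rw [Finset.mem_Icc] at hj
      have hj1 : (1:ℝ) ≤ j := by exact_mod_cast hj.1
      have hjq : (j:ℝ) ≤ q := by exact_mod_cast hj.2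
      rw [norm_pow]
      have hd : ((q / j : ℕ) : ℝ) * j ≤ q := by exact_mod_cast Nat.div_mul_le_self q j
      obtain ⟨s, hs⟩ : ∃ s, s = ‖(j:ℂ) * z‖ := ⟨_, rfl⟩
      have hs0 : 0 ≤ s := by rw [hs]; positivity
      have hs1 : s ≤ j * (2 / (1000 * p)) := by
        rw [hs, norm_mul, Complex.norm_natCast]; gcongr
      have hs2 : s ≤ 1/500 := by
        refine hs1.trans ?_
        calc (j:ℝ) * (2 / (1000 * p)) ≤ p * (2 / (1000 * p)) := by gcongr; linarith
          _ = 1/500 := by field_simp; norm_num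
      have hs3 : s ^ 2 * ((q/j : ℕ) : ℝ) ≤ 1/2 := by
        calc s ^ 2 * ((q/j : ℕ) : ℝ) = s * (s * ((q/j : ℕ) : ℝ)) := by ring
          _ ≤ 1/500 * ((j * (2 / (1000 * p))) * ((q/j : ℕ) : ℝ)) := by gcongr
          _ = 1/500 * ((2 / (1000 * p)) * (((q/j : ℕ) : ℝ) * j)) := by ring
          _ ≤ 1/500 * ((2 / (1000 * p)) * p) := by gcongr; linarith
          _ ≤ 1/2 := by
            rw [show (2 / (1000 * (p:ℝ))) * p = 1/500 by field_simp; norm_num]; norm_num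
      have h1 : Real.exp (-(2 * s ^ 2)) ≤ ‖1 - ((j : ℂ) * z) ^ 2‖ := by
        have a : 1 - s ^ 2 ≤ ‖1 - ((j : ℂ) * z) ^ 2‖ := by
          have := norm_sub_norm_le (1:ℂ) (((j : ℂ) * z) ^ 2)
          rwa [norm_one, norm_pow, ← hs] at this
        refine le_trans ?_ a
        rw [Real.exp_neg]
        have b : 1 + 2 * s ^ 2 ≤ Real.exp (2 * s ^ 2) := by linarith [Real.add_one_le_exp (2 * s ^ 2)]
        have c : 0 ≤ s ^ 2 := sq_nonneg _
        have d : s ^ 2 ≤ 1/2 := by nlinarith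
        calc (Real.exp (2 * s^2))⁻¹ ≤ (1 + 2 * s ^ 2)⁻¹ := inv_anti₀ (by linarith) b
          _ ≤ _ := by
            rw [inv_le_iff_one_le_mul₀ (by linarith)]; nlinarith
      calc Real.exp (-1) ≤ Real.exp (-(2 * s ^ 2)) ^ (q / j) := by
            rw [← Real.exp_nat_mul]; gcongr; linarith
        _ ≤ _ := by gcongr

lemma gq_pos_le (q : ℕ) (N : ℤ) (hN : (q : ℤ) < |N|) :
    0 < gq q (1 / (N:ℝ)) ∧ gq q (1 / (N:ℝ)) ≤ 1 := by
  have hN' : (q:ℝ) < |(N:ℝ)| := by exact_mod_cast hN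
  have hfac : ∀ j ∈ Finset.Icc 1 q, 0 < 1 - ((j:ℝ) * (1 / (N:ℝ))) ^ 2 ∧ 1 - ((j:ℝ) * (1 / (N:ℝ))) ^ 2 ≤ 1 := by
    intro j hj
    rw [Finset.mem_Icc] at hj
    have hjq : (j:ℝ) ≤ q := by exact_mod_cast hj.2
    have hj0 : (0:ℝ) ≤ j := by positivity
    have hpos : 0 < |(N:ℝ)| := by linarith
    refine ⟨?_, by linarith [sq_nonneg ((j:ℝ) * (1 / (N:ℝ)))]⟩
    have : |(j:ℝ) * (1 / (N:ℝ))| < 1 := by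
      rw [abs_mul, abs_div, abs_one, abs_of_nonneg hj0, mul_one_div, div_lt_one hpos]
      linarith
    have := (sq_lt_one_iff_abs_lt_one _).2 this
    linarith
  unfold gq
  constructor
  · exact Finset.prod_pos fun j hj => pow_pos (hfac j hj).1 _
  · exact Finset.prod_le_one (fun j hj => (pow_pos (hfac j hj).1 _).le)
      fun j hj => pow_le_one₀ (hfac j hj).1.le (hfac j hj).2

lemma final (p q : ℕ) (hq : 1 ≤ q) (hqp : q ≤ p) (f : Polynomial ℝ) (hf : f.natDegree ≤ p) (B : ℝ)
    (hB : ∀ N : ℤ, (q : ℤ) < |N| → |f.eval (1 / (N : ℝ)) / gq q (1 / (N : ℝ))| ≤ B)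
    (m : ℕ) (hm : 1 ≤ m) (x : ℝ) (hx : |x| ≤ 1 / (4000 * p)) :
    |iteratedDeriv m (fun y => f.eval y / gq q y) x| / (m.factorial : ℝ) ≤
            (Real.exp (-(p : ℝ)) * (1000000 * p) ^ m +
              (1000000 * p) ^ (2 * m) / (m.factorial : ℝ)) * B := by
  have hB0 : 0 ≤ B := (abs_nonneg _).trans (hB (q+1) (by rw [abs_of_nonneg] <;> omega))
  have hp1 : (1:ℝ) ≤ p := by exact_mod_cast hq.trans hqp
  have hqp' : (q:ℝ) ≤ p := by exact_mod_cast hqp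
  have hp0 : (0:ℝ) < p := by linarith
  obtain ⟨gC, hgC⟩ : ∃ gC : ℂ → ℂ, gC = fun z => ∏ j ∈ Finset.Icc 1 q, (1 - ((j : ℂ) * z) ^ 2) ^ (q / j) := ⟨_, rfl⟩
  obtain ⟨fC, hfC⟩ : ∃ fC : Polynomial ℂ, fC = f.map ofRealHom := ⟨_, rfl⟩
  obtain ⟨F, hF⟩ : ∃ F : ℂ → ℂ, F = fun z => fC.eval z / gC z := ⟨_, rfl⟩
  have hfr : ∀ y : ℝ, fC.eval (y:ℂ) = ((f.eval y : ℝ) : ℂ) := by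
    intro y; rw [hfC]; exact Polynomial.eval_map_apply (f := ofRealHom) y
  have hgr : ∀ y : ℝ, gC (y:ℂ) = ((gq q y : ℝ) : ℂ) := by
    intro y; rw [hgC]; simp only [gq]; push_cast; rfl
  have hFr : ∀ y : ℝ, F (y:ℂ) = ((f.eval y / gq q y : ℝ) : ℂ) := by
    intro y; rw [hF]; simp only; rw [hfr, hgr]; push_cast; rfl
  have hg1 : ∀ z : ℂ, ‖z‖ ≤ 2 / (1000 * p) → Real.exp (-p) ≤ ‖gC z‖ := by
    intro z hz; rw [hgC]; exact gbound p q hq hqp z hz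
  have hf1 : ∀ z : ℂ, ‖z‖ ≤ 2 / (1000 * p) → ‖fC.eval z‖ ≤ B * Real.exp (5 * p) := by
    intro z hz
    refine lagr p (hq.trans hqp) 1000 B (by norm_num) hB0 fC ?_ ?_ z hz
    · rw [hfC]; exact Polynomial.natDegree_map_le.trans hf
    · intro i hi
      rw [hfr, Complex.norm_real, Real.norm_eq_abs]
      have hN : (q:ℤ) < |((1000 * (p + i) : ℕ) : ℤ)| := by
        rw [abs_of_nonneg] <;> [skip; positivity]
        push_cast; omega
      have h1 := hB _ hN
      obtain ⟨h2, h3⟩ := gq_pos_le q _ hN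
      rw [abs_div, abs_of_pos h2, div_le_iff₀ h2] at h1
      have h4 := h1.trans (mul_le_of_le_one_right hB0 h3)
      push_cast at h4
      exact h4
  have hF1 : ∀ z : ℂ, ‖z‖ ≤ 2 / (1000 * p) → ‖F z‖ ≤ B * Real.exp (6 * p) := by
    intro z hz
    rw [hF]; simp only
    rw [norm_div, div_le_iff₀ ((Real.exp_pos _).trans_le (hg1 z hz))]
    refine (hf1 z hz).trans ?_
    calc B * Real.exp (5 * p) = B * Real.exp (6 * p) * Real.exp (-p) := by
          rw [mul_assoc, ← Real.exp_add]; ring_nf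
      _ ≤ _ := by gcongr; exact hg1 z hz
  have hFd : ∀ z : ℂ, ‖z‖ ≤ 2 / (1000 * p) → DifferentiableAt ℂ F z := by
    intro z hz
    rw [hF]
    refine DifferentiableAt.div fC.differentiable.differentiableAt ?_ ?_
    · rw [hgC]; fun_prop
    · exact norm_pos_iff.1 ((Real.exp_pos _).trans_le (hg1 z hz))
  obtain ⟨δ, hδ⟩ : ∃ δ : ℝ, δ = 1 / (1000 * p) := ⟨_, rfl⟩
  have hδ0 : 0 < δ := by rw [hδ]; positivity
  have h2δ : 2 / (1000 * (p:ℝ)) = 2 * δ := by rw [hδ]; ring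
  rw [h2δ] at hF1 hFd
  have hxδ : |x| ≤ δ / 4 := by rw [hδ]; refine hx.trans (le_of_eq ?_); field_simp; norm_num
  have hxw : ∀ w : ℂ, ‖w‖ ≤ 1 → ‖(x:ℂ) + δ * w‖ ≤ 2 * δ := by
    intro w hw
    refine (norm_add_le _ _).trans ?_
    rw [norm_mul, Complex.norm_real, Complex.norm_real, Real.norm_eq_abs, Real.norm_eq_abs, abs_of_pos hδ0]
    nlinarith
  have hkey : ∀ w : ℂ, ‖w‖ ≤ 1/4 → ‖F (x + δ * w)‖ ≤ 2 * B * Real.exp (72 * p * ‖w‖) := by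
    intro w hw
    refine key (fun w => F (x + δ * w)) p B hp1 hB0 ?_ (fun w hw => hF1 _ (hxw w hw)) ?_ w hw
    · intro w hw
      have h1 : DifferentiableAt ℂ F ((fun w : ℂ => (x:ℂ) + δ * w) w) := hFd _ (hxw w hw)
      exact h1.comp w (by fun_prop)
    · intro t ht
      have hxd : |x / δ| ≤ 1/4 := by
        rw [abs_div, abs_of_pos hδ0, div_le_iff₀ hδ0]; linarith
      obtain ⟨N, hN1, hN2⟩ := fill (1000 * p) (by linarith) (x / δ + t)
        ((abs_add_le _ _).trans (by linarith))
      have hqN : (q:ℤ) < |N| := by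
        have : (q:ℝ) < |(N:ℝ)| := by linarith
        exact_mod_cast this
      refine ⟨1000 * p / N - x / δ, ?_, ?_⟩
      · convert hN2 using 2; ring
      · have e : (x:ℂ) + δ * ((1000 * p / N - x / δ : ℝ) : ℂ) = ((1 / (N:ℝ) : ℝ) : ℂ) := by
          rw [← ofReal_mul, ← ofReal_add]
          congr 1
          have : (1000 * (p:ℝ)) = 1 / δ := by rw [hδ]; field_simp
          rw [this]; field_simp; ring
        rw [e, hFr, Complex.norm_real, Real.norm_eq_abs]
        exact hB N hqN
  have hre : |iteratedDeriv m (fun y => f.eval y / gq q y) x| ≤ ‖iteratedDeriv m F x‖ := by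
    rw [realpart F (fun y => f.eval y / gq q y) (ball 0 (2 * δ)) isOpen_ball
      (fun z hz => (hFd z (by simpa using (mem_ball_zero_iff.1 hz).le)).differentiableWithinAt)
      (fun y _ => by rw [hFr]; simp) m x
      (by
        rw [mem_ball_zero_iff, Complex.norm_real, Real.norm_eq_abs]; linarith)]
    exact Complex.abs_re_le_norm _
  have hcauchy : ∀ ρ M : ℝ, 0 < ρ → ρ ≤ 1 → (∀ w : ℂ, ‖w‖ = ρ → ‖F (x + δ * w)‖ ≤ M) →
      ‖iteratedDeriv m F x‖ ≤ m.factorial * M / (δ * ρ) ^ m := by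
    intro ρ M h0 h1 hM
    have hr : ∀ v ∈ closedBall (x:ℂ) (δ * ρ), v = x + δ * ((v - x) / δ) ∧ ‖(v - x) / δ‖ = ‖v - x‖ / δ ∧ ‖(v - x) / δ‖ ≤ ρ := by
      intro v hv
      have hδc : (δ:ℂ) ≠ 0 := by exact_mod_cast hδ0.ne'
      have e : ‖(v - x) / δ‖ = ‖v - x‖ / δ := by
        rw [norm_div, Complex.norm_real, Real.norm_eq_abs, abs_of_pos hδ0]
      refine ⟨by field_simp; ring, e, ?_⟩
      rw [e, div_le_iff₀ hδ0, mul_comm]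
      rwa [mem_closedBall, dist_eq_norm] at hv
    apply Complex.norm_iteratedDeriv_le_of_forall_mem_sphere_norm_le m (by positivity)
    · apply DifferentiableOn.diffContOnCl
      rw [closure_ball _ (by positivity)]
      intro v hv
      obtain ⟨e1, -, e3⟩ := hr v hv
      rw [e1]
      exact (hFd _ (hxw _ (e3.trans h1))).differentiableWithinAt
    · intro v hv
      obtain ⟨e1, e2, -⟩ := hr v (sphere_subset_closedBall hv)
      rw [e1]
      apply hM
      rw [mem_sphere, dist_eq_norm] at hv
      rw [e2, hv]; field_simp
  have hfac : (0:ℝ) < m.factorial := by exact_mod_cast Nat.factorial_pos m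
  rw [div_le_iff₀ hfac]
  refine hre.trans ?_
  have hm0 : (0:ℝ) < m := by exact_mod_cast hm
  rcases le_total (7 * (p:ℝ)) m with hc | hc
  · have h := hcauchy 1 (B * Real.exp (6 * p)) one_pos le_rfl (fun w hw => hF1 _ (hxw w hw.le))
    refine h.trans ?_
    have e : (m.factorial:ℝ) * (B * Real.exp (6 * p)) / (δ * 1) ^ m
        = (Real.exp (6 * p) * (1000 * p) ^ m) * B * m.factorial := by
      rw [hδ, mul_one, div_pow, one_pow]; field_simp
    rw [e]
    gcongr
    have e7 : Real.exp (7 * p) ≤ 1000 ^ m := by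
      calc Real.exp (7 * p) ≤ Real.exp m := Real.exp_le_exp.2 hc
        _ = Real.exp 1 ^ m := by rw [← Real.exp_nat_mul, mul_one]
        _ ≤ 1000 ^ m := by
          gcongr
          have := Real.exp_one_lt_d9
          linarith
    have : Real.exp (6 * p) * (1000 * p) ^ m ≤ Real.exp (-p) * (1000000 * p) ^ m := by
      calc Real.exp (6 * p) * (1000 * p) ^ m = Real.exp (-p) * (Real.exp (7 * p) * (1000 * p) ^ m) := by
            rw [← mul_assoc, ← Real.exp_add]; ring_nf
        _ ≤ Real.exp (-p) * (1000 ^ m * (1000 * p) ^ m) := by gcongr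
        _ = _ := by rw [← mul_pow]; ring_nf
    have : 0 ≤ (1000000 * (p:ℝ)) ^ (2 * m) / m.factorial := by positivity
    linarith
  · have hρ : (m:ℝ) / (28 * p) ≤ 1/4 := by
      rw [div_le_iff₀ (by positivity)]; linarith
    have h := hcauchy (m / (28 * p)) (2 * B * Real.exp (3 * m)) (by positivity) (by linarith) (by
      intro w hw
      refine (hkey w (by rw [hw]; exact hρ)).trans ?_
      refine mul_le_mul_of_nonneg_left (Real.exp_le_exp.2 ?_) (by positivity)
      rw [hw]
      have : 72 * (p:ℝ) * (m / (28 * p)) = 72/28 * m := by field_simp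
      rw [this]; linarith)
    refine h.trans ?_
    have hmm : (m.factorial:ℝ) ≤ (m:ℝ) ^ m := by exact_mod_cast Nat.factorial_le_pow m
    have e3 : Real.exp (3 * m) ≤ 27 ^ m := by
      have : Real.exp (3 * m) = (Real.exp 1 ^ 3) ^ m := by
        rw [← Real.exp_nat_mul, ← Real.exp_nat_mul]; push_cast; congr 1; ring
      rw [this]
      gcongr
      have := Real.exp_one_lt_d9
      calc Real.exp 1 ^ 3 ≤ 3 ^ 3 := by gcongr; linarith
        _ = 27 := by norm_num
    have h2 : (2:ℝ) ≤ 2 ^ m := by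
      calc (2:ℝ) = 2 ^ 1 := by norm_num
        _ ≤ 2 ^ m := pow_le_pow_right₀ (by norm_num) hm
    have e : (m.factorial:ℝ) * (2 * B * Real.exp (3 * m)) / (δ * (m / (28 * p))) ^ m
        = ((m.factorial / (m:ℝ) ^ m) * 2 * Real.exp (3 * m) * (28000 * p ^ 2) ^ m) * B := by
      have : δ * (m / (28 * p)) = m / (28000 * p ^ 2) := by rw [hδ]; field_simp; norm_num
      rw [this, div_pow]; field_simp
    rw [e]
    have hq1 : (m.factorial / (m:ℝ) ^ m) ≤ 1 := by
      rw [div_le_one (by positivity)]; exact hmm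
    have big : (m.factorial / (m:ℝ) ^ m) * 2 * Real.exp (3 * m) * (28000 * p ^ 2) ^ m ≤ (1000000 * p) ^ (2 * m) := by
      calc _ ≤ 1 * 2 ^ m * 27 ^ m * (28000 * (p:ℝ) ^ 2) ^ m := by gcongr
        _ = (1512000 * (p:ℝ) ^ 2) ^ m := by rw [one_mul, ← mul_pow, ← mul_pow]; ring_nf
        _ ≤ ((1000000 * (p:ℝ)) ^ 2) ^ m := by
          gcongr
          rw [mul_pow]; gcongr; norm_num
        _ = _ := by rw [← pow_mul]
    calc _ ≤ (1000000 * (p:ℝ)) ^ (2 * m) * B := by gcongr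
      _ ≤ (Real.exp (-p) * (1000000 * p) ^ m * m.factorial + (1000000 * (p:ℝ)) ^ (2 * m)) * B := by
        gcongr
        have : 0 ≤ Real.exp (-p) * (1000000 * (p:ℝ)) ^ m * m.factorial := by positivity
        linarith
      _ = _ := by field_simp

end

/-- **Rational Bernstein inequality.**  There are universal constants `c, C > 0` so that
for `p ≥ q ≥ 1`, any real polynomial `f` of degree at most `p`, and `r = f/g_q` bounded
by `B` on `I_q = {1/N : N ∈ ℤ, |N| > q}`, one has for all `m ≥ 1` and `|x| ≤ 1/(cp)`:
`|r^(m)(x)|/m! ≤ (e^(-p)(Cp)^m + (Cp)^(2m)/m!)·B`. -/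
theorem stmt_10 :
    ∃ c C : ℝ, 0 < c ∧ 0 < C ∧
      ∀ (p q : ℕ), 1 ≤ q → q ≤ p →
      ∀ f : Polynomial ℝ, f.natDegree ≤ p →
      ∀ B : ℝ,
        (∀ N : ℤ, (q : ℤ) < |N| →
          |f.eval (1 / (N : ℝ)) / gq q (1 / (N : ℝ))| ≤ B) →
        ∀ m : ℕ, 1 ≤ m → ∀ x : ℝ, |x| ≤ 1 / (c * p) →
          |iteratedDeriv m (fun y => f.eval y / gq q y) x| / (m.factorial : ℝ) ≤
            (Real.exp (-(p : ℝ)) * (C * p) ^ m +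
              (C * p) ^ (2 * m) / (m.factorial : ℝ)) * B := by
  refine ⟨4000, 1000000, by norm_num, by norm_num, ?_⟩
  intro p q hq hqp f hf B hB m hm x hx
  exact final p q hq hqp f hf B hB m hm x hx
end
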